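/- arXiv:1507.07218 — 4 statements merged into one kernel-verified Lean document; each statement's English description precedes it below -/
import Mathlib

section
/- Let P̄ be a barycenter of the discrete probability measures P₁,…,P_N. Then there exist finite convex functions ψ₁,…,ψ_N : ℝ^d → ℝ, each differentiable at every point of supp(P̄), such that: (i) the pushforward of P̄ under the gradient map ∇ψᵢ equals Pᵢ for every i; (ii) ∫ ‖x − ∇ψᵢ(x)‖² dP̄(x) = W₂(P̄,Pᵢ)² for every i; (iii) (1/N) Σᵢ₌₁ᴺ ∇ψᵢ(x_j) = x_j for every x_j ∈ supp(P̄); and (iv) (1/N) Σᵢ₌₁ᴺ ψᵢ(x_j) = ‖x_j‖²/2 for every x_j ∈ supp(P̄). -/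
/-!
The proof runs through the dual of a finite multi-marginal transport problem. Let `A i` be the finite
support of `P i` and, for `a ∈ ∏ A i` with centroid `ā`, let `c a = ∑ i, ‖ā - a i‖²`. Finite
strong duality (`kantorovich_duality`) gives potentials `φ i` with `∑ i, φ i (a i) ≤ c a` and a
multi-coupling `π` of the `P i` under which equality holds; so `∑ π c = ∑ i, ∫ φ i dP i =: V`.

Put `ψ i x = max_{b ∈ A i} (⟪b, x⟫ - (‖b‖² - φ i b) / 2)`, a maximum of affine functions, and
`u i x = ‖x‖² - 2 ψ i x = min_b (‖x - b‖² - φ i b)`. If `a i` attains the minimum for each `i`, the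
parallel axis identity gives
`∑ i, u i x = N ‖x - ā‖² + c a - ∑ i, φ i (a i) ≥ N ‖x - ā‖² ≥ 0`.
Weak duality gives `W₂(P̄, P i)² ≥ ∫ u i dP̄ + ∫ φ i dP i`, and the law of the centroid under `π`
(`exists_sum_W2sq_le`) has total cost at most `V`. Comparing with the minimality of `P̄`, all of these
are equalities and `∑ i, u i = 0` on the support of `P̄`. This last fact is the averaging identity
for the `ψ i`.

At a support point `x`, every choice of minimizers `a` therefore has centroid `x`. Changing one
coordinate at a time shows that the minimizers are unique, so `ψ i` is differentiable at `x` with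
gradient `a i`, the gradients average to `x`, and the support of `P̄` is finite. Finally, the
excess cost of a coupling over `W₂(P̄, P i)²` is the integral of a nonnegative slack which, on the
relevant finite set, vanishes only on the graph of `∇ψ i`. Hence nearly optimal couplings nearly
live on that graph, which forces `∇ψ i` to push `P̄` to `P i` (`map_eq_of_W2sq_eq`), and the graph
coupling has cost `W₂(P̄, P i)²` (`cost_map_eq`).
-/

open MeasureTheory ENNReal

noncomputable section

/-- Euclidean space `ℝ^d`. -/
abbrev Euc (d : ℕ) := EuclideanSpace ℝ (Fin d)

/-- The (topological) support of a measure on `ℝ^d`: the set of points all of whose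
neighborhoods have positive measure. -/
def msupp {d : ℕ} (μ : MeasureTheory.Measure (Euc d)) : Set (Euc d) :=
  {x | ∀ U ∈ nhds x, μ U ≠ 0}

/-- A discrete probability measure: a probability measure with finite support. -/
def IsDiscreteProb {d : ℕ} (μ : MeasureTheory.Measure (Euc d)) : Prop :=
  IsProbabilityMeasure μ ∧ (msupp μ).Finite

/-- Finite second moment. -/
def FinSecondMoment {d : ℕ} (μ : MeasureTheory.Measure (Euc d)) : Prop :=
  ∫⁻ x, (‖x‖₊ : ℝ≥0∞) ^ 2 ∂μ < ⊤

/-- A coupling of `P` and `Q`: a measure on the product whose first marginal is `P`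
and second marginal is `Q`. -/
def IsCoupling {d : ℕ} (γ : MeasureTheory.Measure (Euc d × Euc d))
    (P Q : MeasureTheory.Measure (Euc d)) : Prop :=
  γ.map Prod.fst = P ∧ γ.map Prod.snd = Q

/-- Squared 2-Wasserstein distance: infimum of the quadratic transport cost over couplings. -/
def W2sq {d : ℕ} (P Q : MeasureTheory.Measure (Euc d)) : ℝ≥0∞ :=
  ⨅ γ ∈ {γ | IsCoupling γ P Q}, ∫⁻ p, (‖p.1 - p.2‖₊ : ℝ≥0∞) ^ 2 ∂γ

/-- A barycenter of `P 0, …, P (N-1)`: a probability measure with finite second moment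
minimizing the sum of squared Wasserstein distances over all such measures. -/
def IsBarycenter {d N : ℕ} (P : Fin N → MeasureTheory.Measure (Euc d))
    (Pbar : MeasureTheory.Measure (Euc d)) : Prop :=
  IsProbabilityMeasure Pbar ∧ FinSecondMoment Pbar ∧
    ∀ Q : MeasureTheory.Measure (Euc d), IsProbabilityMeasure Q → FinSecondMoment Q →
      ∑ i, W2sq Pbar (P i) ≤ ∑ i, W2sq Q (P i)

/-- A multi-coupling of `P 0, …, P (N-1)`: a probability measure on `(ℝ^d)^N` whose
`i`-th coordinate marginal is `P i`. -/
def IsMultiCoupling {d N : ℕ} (π : MeasureTheory.Measure (Fin N → Euc d))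
    (P : Fin N → MeasureTheory.Measure (Euc d)) : Prop :=
  IsProbabilityMeasure π ∧ ∀ i, π.map (fun x => x i) = P i

/-- The averaging map `(x₁, …, x_N) ↦ (x₁ + ⋯ + x_N)/N`. -/
def avgMap (d N : ℕ) : (Fin N → Euc d) → Euc d := fun x => (N : ℝ)⁻¹ • ∑ i, x i

/-- The set `S` of all centroids of support points, one from each measure. -/
def centroidSet {d N : ℕ} (P : Fin N → MeasureTheory.Measure (Euc d)) : Set (Euc d) :=
  {s | ∃ x : Fin N → Euc d, (∀ i, x i ∈ msupp (P i)) ∧ s = (N : ℝ)⁻¹ • ∑ i, x i}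

open scoped InnerProductSpace

/-! ### Finite multi-marginal duality -/

/-- The expectation of `∑ j, φ j (a j)` under the product of the probability vectors `p i` only
sees the vectors `p j` themselves. -/
lemma sum_prod_weight {N : ℕ} {K : Fin N → Type*} [∀ i, Fintype (K i)]
    (p : ∀ i, K i → ℝ) (hp1 : ∀ i, ∑ b, p i b = 1) (φ : ∀ i, K i → ℝ) :
    ∑ a : (∀ i, K i), (∏ i, p i (a i)) * ∑ j, φ j (a j) = ∑ j, ∑ b, p j b * φ j b := by
  classical
  simp_rw [Finset.mul_sum]
  rw [Finset.sum_comm]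
  refine Finset.sum_congr rfl fun j _ => ?_
  have h : ∀ a : (∀ i, K i), (∏ i, p i (a i)) * φ j (a j)
      = ∏ i, p i (a i) * (if h : i = j then φ j (h ▸ a i) else 1) := by
    intro a
    rw [Finset.prod_mul_distrib, Finset.prod_eq_single j (f := fun i => if h : i = j then _ else _)]
    · simp
    · intro i _ hij; simp [hij]
    · simp
  simp_rw [h]
  rw [← Fintype.prod_sum (fun i b => p i b * (if h : i = j then φ j (h ▸ b) else 1)),
    Finset.prod_eq_single j]
  · simp
  · intro i _ hij; simp [hij, hp1]
  · simp

/-- Strong duality, with attainment on both sides, for the multi-marginal transport problem between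
probability vectors `p i` with positive entries: there are potentials `φ i` with
`∑ i, φ i (a i) ≤ c a` and a plan `π` with marginals `p i` that charges only the points `a` where
this is an equality. -/
theorem kantorovich_duality {N : ℕ} (hN : 0 < N) {K : Fin N → Type*} [∀ i, Fintype (K i)]
    [∀ i, DecidableEq (K i)]
    (p : ∀ i, K i → ℝ) (hp : ∀ i b, 0 < p i b) (hp1 : ∀ i, ∑ b, p i b = 1)
    (c : (∀ i, K i) → ℝ) :
    ∃ (φ : ∀ i, K i → ℝ) (π : (∀ i, K i) → ℝ),
      (∀ a, 0 ≤ π a) ∧ (∑ a, π a = 1) ∧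
      (∀ i b, ∑ a, (if a i = b then π a else 0) = p i b) ∧
      (∀ a, ∑ i, φ i (a i) ≤ c a) ∧ (∀ a, π a ≠ 0 → ∑ i, φ i (a i) = c a) := by
  classical
  let L : (∀ i, K i → ℝ) →ₗ[ℝ] ((∀ i, K i) → ℝ) :=
    { toFun := fun φ a => ∑ i, φ i (a i)
      map_add' := by intro x y; ext a; simp [Finset.sum_add_distrib]
      map_smul' := by intro x y; ext a; simp [Finset.mul_sum] }
  have hLa : ∀ φ a, L φ a = ∑ i, φ i (a i) := fun _ _ => rfl
  let w : (∀ i, K i) → ℝ := fun a => ∏ i, p i (a i)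
  have hw : ∀ a, 0 < w a := fun a => Finset.prod_pos fun i _ => hp i _
  let E : ((∀ i, K i) → ℝ) → ℝ := fun f => ∑ a, w a * f a
  have hEc : Continuous E := by fun_prop
  have hEL : ∀ φ, E (L φ) = ∑ j, ∑ b, p j b * φ j b := fun φ => sum_prod_weight p hp1 φ
  have hN' : (N : ℝ) ≠ 0 := by positivity
  have hconst : ∀ u : ℝ, L (fun _ _ => u / N) = fun _ => u := by
    intro u; ext a; simp [hLa]; field_simp
  have hEconst : ∀ u : ℝ, E (fun _ => u) = u := by
    intro u
    rw [← hconst u, hEL]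
    simp only [← Finset.sum_mul, hp1]
    simp
    field_simp
  obtain ⟨m, hm⟩ : ∃ m : ℝ, ∀ a, m ≤ c a := by
    obtain ⟨m, hm⟩ := (Set.finite_range c).bddBelow
    exact ⟨m, fun a => hm ⟨a, rfl⟩⟩
  -- The range of `L` is parametrized redundantly by potentials, so the dual problem is posed for the
  -- function `f = L φ`; positivity of `w` then makes the superlevel sets of `E` bounded.
  let C : Set ((∀ i, K i) → ℝ) := {f | f ∈ LinearMap.range L ∧ f ≤ c ∧ m ≤ E f}
  have hCcl : IsClosed C :=
    (Submodule.closed_of_finiteDimensional (LinearMap.range L)).inter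
      ((isClosed_le continuous_id continuous_const).inter
        (isClosed_le continuous_const hEc))
  have hCsub : C ⊆ Set.Icc (fun a => c a - (E c - m) / w a) c := by
    rintro f ⟨-, hfc, hmf⟩
    refine ⟨fun a => ?_, hfc⟩
    have h1 : w a * (c a - f a) ≤ ∑ a, w a * (c a - f a) :=
      Finset.single_le_sum (f := fun a => w a * (c a - f a))
        (fun a _ => mul_nonneg (hw a).le (sub_nonneg.2 (hfc a))) (Finset.mem_univ a)
    have h2 : ∑ a, w a * (c a - f a) = E c - E f := by
      simp only [E, mul_sub, Finset.sum_sub_distrib]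
    have h3 : c a - f a ≤ (E c - m) / w a := by
      rw [le_div_iff₀ (hw a)]; linarith
    show c a - (E c - m) / w a ≤ f a
    linarith
  have hCcomp : IsCompact C := isCompact_Icc.of_isClosed_subset hCcl hCsub
  obtain ⟨f, ⟨⟨φ, hφ⟩, hfc, hmf⟩, hmax⟩ := hCcomp.exists_isMaxOn
    ⟨fun _ => m, ⟨_, hconst m⟩, hm, (hEconst m).ge⟩ hEc.continuousOn
  -- `D` is the set of probability vectors concentrated on the contact set `{f = c}`.
  let D : Set ((∀ i, K i) → ℝ) := stdSimplex ℝ (∀ i, K i) ∩ {π | ∀ a, f a ≠ c a → π a = 0}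
  have hDconv : Convex ℝ D := by
    refine (convex_stdSimplex ℝ _).inter ?_
    intro x hx y hy s t _ _ _ a ha
    simp [hx a ha, hy a ha]
  have hDcomp : IsCompact D := by
    refine (isCompact_stdSimplex ℝ _).inter_right ?_
    simp only [Set.ofPred_forall]
    exact isClosed_iInter fun a => isClosed_iInter fun _ =>
      isClosed_eq (continuous_apply a) continuous_const
  -- `G π` is the family of one-dimensional marginals of `π`.
  let G : ((∀ i, K i) → ℝ) →ₗ[ℝ] ((Σ i, K i) → ℝ) :=
    { toFun := fun π z => ∑ a, if a z.1 = z.2 then π a else 0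
      map_add' := by
        intro x y; ext z
        simp only [Pi.add_apply, ← Finset.sum_add_distrib]
        exact Finset.sum_congr rfl fun a _ => by split_ifs <;> simp
      map_smul' := by intro x y; ext z; simp [Finset.mul_sum] }
  have hGa : ∀ π z, G π z = ∑ a, if a z.1 = z.2 then π a else 0 := fun _ _ => rfl
  by_cases hmem : (fun z : (Σ i, K i) => p z.1 z.2) ∈ G '' D
  · obtain ⟨π, ⟨hπ, hπ0⟩, hG⟩ := hmem
    refine ⟨φ, π, hπ.1, hπ.2, fun i b => congrFun hG ⟨i, b⟩, fun a => ?_, fun a ha => ?_⟩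
    · rw [← hLa, hφ]; exact hfc a
    · rw [← hLa, hφ]; by_contra h; exact ha (hπ0 a h)
  -- Otherwise a separating functional gives potentials `χ` such that `L χ - u` is negative on the
  -- contact set but has positive expectation; moving `f` in that direction contradicts maximality.
  exfalso
  obtain ⟨l, u, hl, hu⟩ := geometric_hahn_banach_closed_point (hDconv.linear_image G)
    (hDcomp.image G.continuous_of_finiteDimensional).isClosed hmem
  let χ : ∀ i, K i → ℝ := fun i b => l (Pi.single ⟨i, b⟩ 1)
  have hlx : ∀ x : (Σ i, K i) → ℝ, l x = ∑ i, ∑ b, x ⟨i, b⟩ * χ i b := by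
    intro x
    conv_lhs => rw [pi_eq_sum_univ' x]
    rw [map_sum, Fintype.sum_sigma]
    simp only [map_smul, smul_eq_mul]
    rfl
  have hlG : ∀ a, f a = c a → L χ a < u := by
    intro a ha
    have h1 : Pi.single a 1 ∈ D := by
      refine ⟨single_mem_stdSimplex ℝ a, fun a' ha' => ?_⟩
      rw [Pi.single_eq_of_ne]; rintro rfl; exact ha' ha
    have h2 := hl _ ⟨_, h1, rfl⟩
    rw [hlx] at h2
    convert h2 using 1
    rw [hLa]
    refine Finset.sum_congr rfl fun i _ => ?_
    have h3 : ∀ b, G (Pi.single a 1) ⟨i, b⟩ = if a i = b then 1 else 0 := by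
      intro b
      rw [hGa, Finset.sum_eq_single a]
      · simp
      · intro a' _ h; simp [h]
      · simp
    simp [h3]
  rw [hlx, ← hEL] at hu
  have hev : ∀ᶠ t in nhdsWithin (0 : ℝ) (Set.Ioi 0), ∀ a, f a + t * (L χ a - u) ≤ c a := by
    rw [Filter.eventually_all]
    intro a
    by_cases ha : f a = c a
    · filter_upwards [self_mem_nhdsWithin] with t ht
      have := hlG a ha
      have ht' : 0 < t := ht
      nlinarith
    · have hlt : f a + 0 * (L χ a - u) < c a := by
        simpa using lt_of_le_of_ne (hfc a) ha
      have hcont : Continuous fun t : ℝ => f a + t * (L χ a - u) := by fun_prop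
      exact ((hcont.tendsto 0).eventually (eventually_lt_nhds hlt)).filter_mono
        nhdsWithin_le_nhds |>.mono fun t h => h.le
  obtain ⟨t, ht, ht0⟩ := (hev.and self_mem_nhdsWithin).exists
  have ht0' : 0 < t := ht0
  have hE' : E (fun a => f a + t * (L χ a - u)) = E f + t * (E (L χ) - u) := by
    have h1 : E (fun a => f a + t * (L χ a - u)) = E f + t * (E (L χ) - E fun _ => u) := by
      simp only [E, ← Finset.sum_sub_distrib, Finset.mul_sum, ← Finset.sum_add_distrib]
      exact Finset.sum_congr rfl fun a _ => by ring
    rw [h1, hEconst]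
  have hgt : E f < E (fun a => f a + t * (L χ a - u)) := by
    rw [hE']; nlinarith
  refine absurd (hmax (a := fun a => f a + t * (L χ a - u)) ⟨⟨φ + t • (χ - fun _ _ => u / N), ?_⟩, ht, hmf.trans hgt.le⟩) (not_le.2 hgt)
  rw [map_add, map_smul, map_sub, hconst, hφ]
  rfl

/-! ### Maxima of affine functions -/

section
variable {E : Type*} [NormedAddCommGroup E] [InnerProductSpace ℝ E]

/-- The maximum over `b ∈ A` of the affine functions `x ↦ ⟪b, x⟫ - (‖b‖² - φ b) / 2`, so that
`‖x‖² - 2 * maxPot A φ x` is the minimum of `‖x - b‖² - φ b` over `b ∈ A`. The value for empty `A`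
is a dummy. -/
def maxPot (A : Finset E) (φ : E → ℝ) (x : E) : ℝ :=
  if h : A.Nonempty then A.sup' h fun b => ⟪b, x⟫_ℝ - (‖b‖ ^ 2 - φ b) / 2 else 0

lemma le_maxPot {A : Finset E} (φ : E → ℝ) (x : E) {b : E} (hb : b ∈ A) :
    ⟪b, x⟫_ℝ - (‖b‖ ^ 2 - φ b) / 2 ≤ maxPot A φ x := by
  rw [maxPot, dif_pos ⟨b, hb⟩]
  exact Finset.le_sup' (fun b => ⟪b, x⟫_ℝ - (‖b‖ ^ 2 - φ b) / 2) hb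

lemma exists_eq_maxPot {A : Finset E} (hA : A.Nonempty) (φ : E → ℝ) (x : E) :
    ∃ b ∈ A, maxPot A φ x = ⟪b, x⟫_ℝ - (‖b‖ ^ 2 - φ b) / 2 := by
  rw [maxPot, dif_pos hA]
  exact Finset.exists_mem_eq_sup' hA _

lemma continuous_maxPot (A : Finset E) (φ : E → ℝ) : Continuous (maxPot A φ) := by
  unfold maxPot
  split_ifs with h
  · exact Continuous.finset_sup'_apply h fun b _ => by fun_prop
  · exact continuous_const

lemma convexOn_maxPot {A : Finset E} (hA : A.Nonempty) (φ : E → ℝ) :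
    ConvexOn ℝ Set.univ (maxPot A φ) := by
  refine ⟨convex_univ, fun x _ y _ s t hs ht hst => ?_⟩
  obtain ⟨b, hb, h⟩ := exists_eq_maxPot hA φ (s • x + t • y)
  have hx := mul_le_mul_of_nonneg_left (le_maxPot φ x hb) hs
  have hy := mul_le_mul_of_nonneg_left (le_maxPot φ y hb) ht
  rw [h, inner_add_right, inner_smul_right, inner_smul_right, smul_eq_mul, smul_eq_mul]
  obtain rfl : t = 1 - s := by linarith
  linarith

/-- Where the maximum is attained by a single `b`, the function is locally affine. -/
lemma hasGradientAt_maxPot [CompleteSpace E] {A : Finset E} (φ : E → ℝ) {x b : E} (hb : b ∈ A)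
    (huniq : ∀ b' ∈ A, maxPot A φ x = ⟪b', x⟫_ℝ - (‖b'‖ ^ 2 - φ b') / 2 → b' = b) :
    HasGradientAt (maxPot A φ) b x := by
  classical
  have hA : A.Nonempty := ⟨b, hb⟩
  have hlin : HasGradientAt (fun y => ⟪b, y⟫_ℝ - (‖b‖ ^ 2 - φ b) / 2) b x := by
    rw [hasGradientAt_iff_hasFDerivAt]
    exact ((InnerProductSpace.toDual ℝ E b).hasFDerivAt).sub_const _
  refine hlin.congr_of_eventuallyEq ?_
  have hev : ∀ᶠ y in nhds x, ∀ b' ∈ A, b' ≠ b →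
      ⟪b', y⟫_ℝ - (‖b'‖ ^ 2 - φ b') / 2 < maxPot A φ y := by
    rw [Filter.eventually_all_finset]
    intro b' hb'
    by_cases h : b' = b
    · simp [h]
    have hlt : ⟪b', x⟫_ℝ - (‖b'‖ ^ 2 - φ b') / 2 < maxPot A φ x :=
      lt_of_le_of_ne (le_maxPot φ x hb') fun h' => h (huniq b' hb' h'.symm)
    have hc : Continuous fun y => ⟪b', y⟫_ℝ - (‖b'‖ ^ 2 - φ b') / 2 := by fun_prop
    filter_upwards [hc.continuousAt.eventually_lt (continuous_maxPot A φ).continuousAt hlt]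
      with y hy _ using hy
  filter_upwards [hev] with y hy
  obtain ⟨b', hb', h⟩ := exists_eq_maxPot hA φ y
  by_cases hbb : b' = b
  · rw [h, hbb]
  · exact absurd h (hy b' hb' hbb).ne'
end

lemma measurable_gradient' {E : Type*} [NormedAddCommGroup E] [InnerProductSpace ℝ E]
    [CompleteSpace E] [MeasurableSpace E] [BorelSpace E] (f : E → ℝ) :
    Measurable (gradient f) :=
  (InnerProductSpace.toDual ℝ E).symm.continuous.measurable.comp (measurable_fderiv ℝ f)

/-- The parallel axis identity around the centroid. -/
lemma norm_sub_sq_eq {E : Type*} [NormedAddCommGroup E] [InnerProductSpace ℝ E]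
    {N : ℕ} (hN : 0 < N) (x : E) (a : Fin N → E) :
    ∑ i, ‖x - a i‖ ^ 2 = N * ‖x - (N : ℝ)⁻¹ • ∑ i, a i‖ ^ 2
      + ∑ i, ‖(N : ℝ)⁻¹ • ∑ j, a j - a i‖ ^ 2 := by
  set m := (N : ℝ)⁻¹ • ∑ i, a i with hm
  have hN' : (N : ℝ) ≠ 0 := by positivity
  have h : ∀ i, ‖x - a i‖ ^ 2 = ‖x - m‖ ^ 2 + 2 * ⟪x - m, m - a i⟫_ℝ + ‖m - a i‖ ^ 2 := by
    intro i
    rw [← norm_add_sq_real, sub_add_sub_cancel]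
  have h0 : ∑ i, (m - a i) = 0 := by
    rw [Finset.sum_sub_distrib, Finset.sum_const, Finset.card_univ, Fintype.card_fin,
      ← Nat.cast_smul_eq_nsmul ℝ, hm, smul_inv_smul₀ hN', sub_self]
  simp_rw [h, Finset.sum_add_distrib, ← Finset.mul_sum, ← inner_sum, h0]
  simp

/-! ### Measures with finite support -/

lemma msupp_eq_support {d : ℕ} (μ : Measure (Euc d)) : msupp μ = μ.support := by
  ext x
  simp [msupp, Measure.mem_support_iff_forall, pos_iff_ne_zero]

lemma ae_mem_msupp {d : ℕ} (μ : Measure (Euc d)) : ∀ᵐ x ∂μ, x ∈ msupp μ := by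
  rw [msupp_eq_support]; exact Measure.support_mem_ae

lemma measure_singleton_ne_zero {d : ℕ} {μ : Measure (Euc d)} (h : (msupp μ).Finite)
    {b : Euc d} (hb : b ∈ msupp μ) : μ {b} ≠ 0 := by
  intro h0
  have hU : (msupp μ \ {b})ᶜ ∈ nhds b :=
    (h.subset Set.sdiff_subset).isClosed.isOpen_compl.mem_nhds (by simp)
  refine hb _ hU ?_
  have : (msupp μ \ {b})ᶜ = (msupp μ)ᶜ ∪ {b} := by ext; simp; tauto
  rw [this]
  exact measure_union_null (ae_mem_msupp μ) h0

lemma measure_eq_of_singleton {d : ℕ} {μ ν : Measure (Euc d)} {A : Finset (Euc d)}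
    (hμ : ∀ᵐ x ∂μ, x ∈ A) (hν : ∀ᵐ x ∂ν, x ∈ A) (h : ∀ b ∈ A, μ {b} = ν {b}) : μ = ν := by
  classical
  have key : ∀ ρ : Measure (Euc d), (∀ᵐ x ∂ρ, x ∈ A) → ∀ s, ρ s = ∑ b ∈ A with b ∈ s, ρ {b} := by
    intro ρ hρ s
    rw [sum_measure_singleton]
    refine measure_congr ?_
    filter_upwards [hρ] with x hx
    simp only [eq_iff_iff, Finset.coe_filter]
    change x ∈ s ↔ x ∈ A ∧ x ∈ s
    tauto
  ext s -
  rw [key μ hμ, key ν hν]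
  exact Finset.sum_congr rfl fun b hb => h b (Finset.mem_filter.1 hb).1

lemma memLp_id_two {d : ℕ} {μ : Measure (Euc d)} (h : FinSecondMoment μ) : MemLp id 2 μ := by
  refine ⟨aestronglyMeasurable_id, ?_⟩
  rw [eLpNorm_lt_top_iff_lintegral_rpow_enorm_lt_top (by norm_num) (by norm_num)]
  simpa [FinSecondMoment, enorm_eq_nnnorm] using h

lemma memLp_id_two_of_ae_mem {d : ℕ} {μ : Measure (Euc d)} [IsProbabilityMeasure μ]
    {A : Finset (Euc d)} (h : ∀ᵐ x ∂μ, x ∈ A) : MemLp id 2 μ := by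
  refine MemLp.of_bound aestronglyMeasurable_id (∑ b ∈ A, ‖b‖) ?_
  filter_upwards [h] with x hx
  exact Finset.single_le_sum (f := fun b => ‖b‖) (fun _ _ => norm_nonneg _) hx

lemma nnnorm_sq_eq {d : ℕ} (x : Euc d) : (‖x‖₊ : ℝ≥0∞) ^ 2 = ENNReal.ofReal (‖x‖ ^ 2) := by
  rw [ENNReal.ofReal_pow (norm_nonneg _), ofReal_norm, enorm_eq_nnnorm]

/-! ### Slack in the dual constraint for the quadratic cost -/

/-- The slack at `(x, y)` in the dual constraint `u x + φ y ≤ ‖x - y‖²`, where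
`u x = ‖x‖² - 2 * maxPot A φ x` is the transform of `φ` with respect to the quadratic cost. -/
def slack {d : ℕ} (A : Finset (Euc d)) (φ : Euc d → ℝ) (p : Euc d × Euc d) : ℝ :=
  ‖p.1 - p.2‖ ^ 2 - (‖p.1‖ ^ 2 - 2 * maxPot A φ p.1) - φ p.2

lemma slack_eq {d : ℕ} (A : Finset (Euc d)) (φ : Euc d → ℝ) (x y : Euc d) :
    slack A φ (x, y) = 2 * (maxPot A φ x - (⟪y, x⟫_ℝ - (‖y‖ ^ 2 - φ y) / 2)) := by
  simp only [slack]
  rw [norm_sub_sq_real, real_inner_comm]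
  ring

lemma slack_nonneg {d : ℕ} {A : Finset (Euc d)} (φ : Euc d → ℝ) (x : Euc d) {y : Euc d}
    (hy : y ∈ A) : 0 ≤ slack A φ (x, y) := by
  rw [slack_eq]; linarith [le_maxPot φ x hy]

lemma integrable_maxPot {d : ℕ} {μ : Measure (Euc d)} [IsProbabilityMeasure μ]
    (hμ : FinSecondMoment μ) {A : Finset (Euc d)} (hA : A.Nonempty) (φ : Euc d → ℝ) :
    Integrable (maxPot A φ) μ := by
  have h1 : Integrable (fun x : Euc d => ‖x‖) μ :=
    ((memLp_id_two hμ).integrable (by norm_num)).norm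
  have h2 : Integrable (fun x : Euc d => ∑ b ∈ A, (‖b‖ * ‖x‖ + |(‖b‖ ^ 2 - φ b) / 2|)) μ :=
    integrable_finsetSum _ fun b _ => (h1.const_mul _).add (integrable_const _)
  refine h2.mono' (continuous_maxPot A φ).aestronglyMeasurable (ae_of_all _ fun x => ?_)
  obtain ⟨b, hb, h⟩ := exists_eq_maxPot hA φ x
  refine le_trans ?_ (Finset.single_le_sum
    (f := fun b => ‖b‖ * ‖x‖ + |(‖b‖ ^ 2 - φ b) / 2|) (fun _ _ => by positivity) hb)
  rw [h, Real.norm_eq_abs]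
  exact (abs_sub _ _).trans (add_le_add_left (abs_real_inner_le_norm _ _) _)

lemma integrable_of_ae_mem_finset {d : ℕ} {μ : Measure (Euc d)} [IsProbabilityMeasure μ]
    {A : Finset (Euc d)} (h : ∀ᵐ x ∂μ, x ∈ A) {φ : Euc d → ℝ} (hφ : Measurable φ) :
    Integrable φ μ := by
  refine Integrable.of_bound hφ.aestronglyMeasurable (∑ b ∈ A, ‖φ b‖) ?_
  filter_upwards [h] with x hx
  exact Finset.single_le_sum (f := fun b => ‖φ b‖) (fun _ _ => norm_nonneg _) hx

lemma integral_of_ae_mem_finset {d : ℕ} {μ : Measure (Euc d)} [IsProbabilityMeasure μ]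
    {A : Finset (Euc d)} (h : ∀ᵐ x ∂μ, x ∈ A) {φ : Euc d → ℝ} (hφ : Measurable φ) :
    ∫ x, φ x ∂μ = ∑ b ∈ A, μ.real {b} * φ b := by
  have h1 := setIntegral_finset (μ := μ) (s := A) (f := φ) (integrable_of_ae_mem_finset h hφ).integrableOn
  have h2 : μ.restrict (A : Set (Euc d)) = μ := Measure.restrict_eq_self_of_ae_mem h
  rw [h2] at h1
  simpa using h1

/-- The Kantorovich dual value of the pair `(u, φ)` for transport from `P` to `Q`, where
`u x = ‖x‖² - 2 * maxPot A φ x`. -/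
def dualValue {d : ℕ} (P Q : Measure (Euc d)) (A : Finset (Euc d)) (φ : Euc d → ℝ) : ℝ :=
  ∫ x, (‖x‖ ^ 2 - 2 * maxPot A φ x) ∂P + ∫ y, φ y ∂Q

section
variable {d : ℕ} {P Q : Measure (Euc d)} {A : Finset (Euc d)} {φ : Euc d → ℝ}
  {γ : Measure (Euc d × Euc d)}

lemma IsCoupling.mp_fst (hγ : IsCoupling γ P Q) : MeasurePreserving Prod.fst γ P :=
  ⟨measurable_fst, hγ.1⟩

lemma IsCoupling.mp_snd (hγ : IsCoupling γ P Q) : MeasurePreserving Prod.snd γ Q :=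
  ⟨measurable_snd, hγ.2⟩

lemma IsCoupling.isProb [IsProbabilityMeasure P] (hγ : IsCoupling γ P Q) : IsProbabilityMeasure γ := by
  constructor
  have := hγ.mp_fst.measure_preimage (s := Set.univ) MeasurableSet.univ.nullMeasurableSet
  simpa using this

lemma IsCoupling.slack_nonneg (hγ : IsCoupling γ P Q) (hA : ∀ᵐ y ∂Q, y ∈ A) :
    0 ≤ᵐ[γ] slack A φ := by
  filter_upwards [hγ.mp_snd.quasiMeasurePreserving.ae hA] with p hp
  exact _root_.slack_nonneg φ p.1 hp

variable [IsProbabilityMeasure P] [IsProbabilityMeasure Q]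

/-- The transport cost of a coupling exceeds the dual value by exactly the integral of the slack. -/
lemma IsCoupling.slack_cost (hγ : IsCoupling γ P Q) (hP : FinSecondMoment P)
    (hA : ∀ᵐ y ∂Q, y ∈ A) (hA0 : A.Nonempty) (hφ : Measurable φ) :
    Integrable (slack A φ) γ ∧
      ∫⁻ p, (‖p.1 - p.2‖₊ : ℝ≥0∞) ^ 2 ∂γ
        = ENNReal.ofReal (dualValue P Q A φ + ∫ p, slack A φ p ∂γ) := by
  have := hγ.isProb
  have hL : MemLp (fun p : Euc d × Euc d => p.1 - p.2) 2 γ :=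
    ((memLp_id_two hP).comp_measurePreserving hγ.mp_fst).sub
      ((memLp_id_two_of_ae_mem hA).comp_measurePreserving hγ.mp_snd)
  have hI : Integrable (fun p : Euc d × Euc d => ‖p.1 - p.2‖ ^ 2) γ :=
    hL.integrable_norm_pow (by norm_num)
  have hu : Integrable (fun x : Euc d => ‖x‖ ^ 2 - 2 * maxPot A φ x) P :=
    ((memLp_id_two hP).integrable_norm_pow (by norm_num)).sub
      ((integrable_maxPot hP hA0 φ).const_mul 2)
  have hf := integrable_of_ae_mem_finset hA hφ
  have hu' := hγ.mp_fst.integrable_comp_of_integrable hu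
  have hf' := hγ.mp_snd.integrable_comp_of_integrable hf
  refine ⟨(hI.sub hu').sub hf', ?_⟩
  have h1 : ∫ p, slack A φ p ∂γ = ∫ p, ‖p.1 - p.2‖ ^ 2 ∂γ - dualValue P Q A φ := by
    have e1 : ∫ p, (‖p.1‖ ^ 2 - 2 * maxPot A φ p.1) ∂γ = ∫ x, (‖x‖ ^ 2 - 2 * maxPot A φ x) ∂P := by
      rw [← hγ.1, integral_map measurable_fst.aemeasurable]
      rw [hγ.1]; exact hu.aestronglyMeasurable
    have e2 : ∫ p, φ p.2 ∂γ = ∫ y, φ y ∂Q := by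
      rw [← hγ.2, integral_map measurable_snd.aemeasurable hφ.aestronglyMeasurable]
    have e3 : ∫ p, slack A φ p ∂γ = ∫ p : Euc d × Euc d, ‖p.1 - p.2‖ ^ 2 ∂γ
        - ∫ p, (‖p.1‖ ^ 2 - 2 * maxPot A φ p.1) ∂γ - ∫ p, φ p.2 ∂γ :=
      (integral_sub (hI.sub hu') hf').trans (congrArg (· - _) (integral_sub hI hu'))
    rw [e3, e1, e2, dualValue]
    ring
  rw [h1, add_sub_cancel, ofReal_integral_eq_lintegral_ofReal hI
    (ae_of_all _ fun p => by positivity)]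
  simp_rw [nnnorm_sq_eq]

lemma dualValue_le_W2sq (hP : FinSecondMoment P)
    (hA : ∀ᵐ y ∂Q, y ∈ A) (hA0 : A.Nonempty) (hφ : Measurable φ) :
    ENNReal.ofReal (dualValue P Q A φ) ≤ W2sq P Q := by
  refine le_iInf₂ fun γ hγ => ?_
  rw [(IsCoupling.slack_cost hγ hP hA hA0 hφ).2]
  exact ENNReal.ofReal_le_ofReal
    (le_add_of_nonneg_right (integral_nonneg_of_ae (IsCoupling.slack_nonneg hγ hA)))

/-- If the dual value is the squared Wasserstein distance, `P` lives on a finite set `S`, and the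
slack vanishes at `(x, y)`, `x ∈ S`, only for `y = T x`, then `T` pushes `P` to `Q`. The slack is
bounded below by some `δ > 0` off the graph of `T`, so Markov's inequality shows that a
nearly optimal coupling gives small mass to `y ≠ T x`; no optimal coupling is needed. -/
lemma map_eq_of_W2sq_eq (hP : FinSecondMoment P)
    (hA : ∀ᵐ y ∂Q, y ∈ A) (hA0 : A.Nonempty) (hφ : Measurable φ)
    (hW : W2sq P Q = ENNReal.ofReal (dualValue P Q A φ)) (hI : 0 ≤ dualValue P Q A φ)
    {T : Euc d → Euc d} (hT : Measurable T) {S : Set (Euc d)} (hS : S.Finite)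
    (hPS : ∀ᵐ x ∂P, x ∈ S) (huniq : ∀ x ∈ S, ∀ y ∈ A, slack A φ (x, y) = 0 → y = T x) :
    P.map T = Q := by
  classical
  obtain ⟨δ, hδ, hδs⟩ : ∃ δ : ℝ, 0 < δ ∧ ∀ x ∈ S, ∀ y ∈ A, y ≠ T x → δ ≤ slack A φ (x, y) := by
    have hF : ({p : Euc d × Euc d | p ∈ S ×ˢ (A : Set (Euc d)) ∧ p.2 ≠ T p.1}).Finite :=
      (hS.prod A.finite_toSet).subset fun p hp => hp.1
    obtain ⟨δ, hδ, h⟩ := (hF.isCompact).exists_forall_le' (f := slack A φ) (a := 0)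
      (hF.continuousOn _) (fun p hp => lt_of_le_of_ne (slack_nonneg φ p.1 hp.1.2)
        fun h => hp.2 (huniq _ hp.1.1 _ hp.1.2 h.symm))
    exact ⟨δ, hδ, fun x hx y hy hne => h (x, y) ⟨⟨hx, hy⟩, hne⟩⟩
  have : IsProbabilityMeasure (P.map T) := Measure.isProbabilityMeasure_map hT.aemeasurable
  refine (Measure.eq_of_le_of_isProbabilityMeasure (Measure.le_iff.2 fun B hB => ?_)).symm
  refine ENNReal.le_of_forall_pos_le_add fun ε hε _ => ?_
  have hε' : (0 : ℝ) < ε := hε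
  have hlt : W2sq P Q < ENNReal.ofReal (dualValue P Q A φ + ε * δ) := by
    rw [hW]
    exact (ENNReal.ofReal_lt_ofReal_iff_of_nonneg hI).2 (by nlinarith)
  simp only [W2sq, iInf_lt_iff] at hlt
  obtain ⟨γ, hγ, hlt⟩ := hlt
  have hγ : IsCoupling γ P Q := hγ
  have := hγ.isProb
  obtain ⟨hint, hcost⟩ := hγ.slack_cost hP hA hA0 hφ
  rw [hcost] at hlt
  have hlt' : ∫ p, slack A φ p ∂γ < ε * δ := by
    have := (ENNReal.ofReal_lt_ofReal_iff_of_nonneg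
      (add_nonneg hI (integral_nonneg_of_ae (hγ.slack_nonneg hA)))).1 hlt
    linarith
  have hmark := mul_meas_ge_le_integral_of_nonneg (hγ.slack_nonneg hA) hint δ
  have hbad : γ {p | δ ≤ slack A φ p} ≤ ε := by
    have h1 : γ.real {p | δ ≤ slack A φ p} ≤ ε := by
      by_contra! h
      nlinarith
    rw [← ENNReal.ofReal_coe_nnreal, ← ofReal_measureReal]
    exact ENNReal.ofReal_le_ofReal h1
  rw [Measure.map_apply hT hB, ← hγ.mp_snd.measure_preimage hB.nullMeasurableSet,
    ← hγ.mp_fst.measure_preimage (hT hB).nullMeasurableSet]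
  refine le_trans ?_ (add_le_add_right hbad _)
  refine le_trans (measure_mono_ae ?_) (measure_union_le _ _)
  filter_upwards [hγ.mp_fst.quasiMeasurePreserving.ae hPS,
    hγ.mp_snd.quasiMeasurePreserving.ae hA] with p hp1 hp2 hpB
  by_cases h : p.2 = T p.1
  · left
    change T p.1 ∈ B
    rw [← h]; exact hpB
  · exact Or.inr (hδs _ hp1 _ hp2 h)

lemma cost_map_eq (hP : FinSecondMoment P)
    (hA : ∀ᵐ y ∂Q, y ∈ A) (hA0 : A.Nonempty) (hφ : Measurable φ)
    {T : Euc d → Euc d} (hT : Measurable T) (hTQ : P.map T = Q)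
    (hopt : ∀ᵐ x ∂P, slack A φ (x, T x) = 0) :
    ∫⁻ x, (‖x - T x‖₊ : ℝ≥0∞) ^ 2 ∂P = ENNReal.ofReal (dualValue P Q A φ) := by
  have hm : Measurable fun x => (x, T x) := measurable_id.prodMk hT
  have hγ : IsCoupling (P.map fun x => (x, T x)) P Q := by
    constructor
    · rw [Measure.map_map measurable_fst hm]; exact Measure.map_id
    · rw [Measure.map_map measurable_snd hm]; exact hTQ
  obtain ⟨hint, hcost⟩ := hγ.slack_cost hP hA hA0 hφ
  rw [lintegral_map (by fun_prop) hm, integral_map hm.aemeasurable hint.aestronglyMeasurable,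
    integral_congr_ae hopt] at hcost
  simpa using hcost

end

/-! ### The centroid law of a multi-coupling -/

/-- The law of the centroid under a multi-coupling `π` of the `P i` competes in the barycenter problem
with total cost at most the expected sum of squared distances to the centroid. -/
lemma exists_sum_W2sq_le {d N : ℕ} (P : Fin N → Measure (Euc d))
    [∀ i, IsProbabilityMeasure (P i)] (A : Fin N → Finset (Euc d))
    (hA : ∀ i, ∀ᵐ y ∂P i, y ∈ A i) [∀ i, DecidableEq (A i)] (π : (∀ i, A i) → ℝ)
    (hπ : ∀ a, 0 ≤ π a) (hπ1 : ∑ a, π a = 1)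
    (hmarg : ∀ i b, ∑ a, (if a i = b then π a else 0) = (P i).real {b.1}) :
    ∃ Q : Measure (Euc d), IsProbabilityMeasure Q ∧ FinSecondMoment Q ∧
      ∑ i, W2sq Q (P i) ≤
        ENNReal.ofReal (∑ a, π a * ∑ i, ‖(N : ℝ)⁻¹ • ∑ j, (a j : Euc d) - a i‖ ^ 2) := by
  classical
  let m : Measure (∀ i, A i) := ∑ a, ENNReal.ofReal (π a) • Measure.dirac a
  have hm : ∀ f : (∀ i, A i) → ℝ≥0∞, ∫⁻ a, f a ∂m = ∑ a, ENNReal.ofReal (π a) * f a := by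
    intro f
    simp [m, lintegral_finsetSum_measure, lintegral_smul_measure]
  have hmp : IsProbabilityMeasure m := by
    constructor
    rw [← lintegral_one, hm]
    simp only [mul_one]
    rw [← ENNReal.ofReal_sum_of_nonneg fun a _ => hπ a, hπ1, ENNReal.ofReal_one]
  have hmeas : ∀ f : (∀ i, A i) → Euc d, Measurable f := fun f => Measurable.of_discrete
  have hmP : ∀ i, m.map (fun a => (a i : Euc d)) = P i := by
    intro i
    refine measure_eq_of_singleton (A := A i) ?_ (hA i) fun b hb => ?_
    · rw [ae_map_iff (hmeas _).aemeasurable (p := fun x => x ∈ A i) (A i).measurableSet]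
      exact ae_of_all _ fun a => (a i).2
    · rw [Measure.map_apply (hmeas _) (measurableSet_singleton b),
        ← lintegral_indicator_one MeasurableSet.of_discrete, hm, ← ofReal_measureReal,
        ← hmarg i ⟨b, hb⟩, ENNReal.ofReal_sum_of_nonneg fun a _ => by split_ifs <;> simp [hπ]]
      refine Finset.sum_congr rfl fun a _ => ?_
      by_cases h : a i = ⟨b, hb⟩
      · simp [h]
      · have h' : (a i : Euc d) ≠ b := fun h' => h (Subtype.ext h')
        simp [h, h']
  let avg : (∀ i, A i) → Euc d := fun a => (N : ℝ)⁻¹ • ∑ j, (a j : Euc d)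
  refine ⟨m.map avg, Measure.isProbabilityMeasure_map (hmeas _).aemeasurable, ?_, ?_⟩
  · rw [FinSecondMoment, lintegral_map (by fun_prop) (hmeas _), hm]
    exact ENNReal.sum_lt_top.2 fun a _ => ENNReal.mul_lt_top ENNReal.ofReal_lt_top (by simp)
  · have h : ∀ i, W2sq (m.map avg) (P i) ≤
        ENNReal.ofReal (∑ a, π a * ‖avg a - a i‖ ^ 2) := by
      intro i
      have hpm : Measurable fun a : (∀ i, A i) => (avg a, (a i : Euc d)) :=
        (hmeas _).prodMk (hmeas _)
      have hγ : IsCoupling (m.map fun a => (avg a, (a i : Euc d))) (m.map avg) (P i) :=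
        ⟨Measure.map_map measurable_fst hpm,
          (Measure.map_map measurable_snd hpm).trans (hmP i)⟩
      have hle : W2sq (m.map avg) (P i) ≤ _ :=
        biInf_le _ (show _ ∈ {γ | IsCoupling γ (m.map avg) (P i)} from hγ)
      refine hle.trans_eq ?_
      rw [lintegral_map (by fun_prop) hpm, hm,
        ENNReal.ofReal_sum_of_nonneg fun a _ => mul_nonneg (hπ a) (by positivity)]
      exact Finset.sum_congr rfl fun a _ => by rw [ENNReal.ofReal_mul (hπ a), nnnorm_sq_eq]
    refine (Finset.sum_le_sum fun i _ => h i).trans_eq ?_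
    rw [← ENNReal.ofReal_sum_of_nonneg fun i _ =>
      Finset.sum_nonneg fun a _ => mul_nonneg (hπ a) (by positivity), Finset.sum_comm]
    simp_rw [Finset.mul_sum]
    rfl

/-! ### The barycenter -/

/-- for any barycenter `P̄` of the discrete probability measures `P₁, …, P_N`
there exist finite convex functions `ψᵢ : ℝ^d → ℝ`, differentiable at every point of the
support of `P̄`, such that (i) `∇ψᵢ` pushes `P̄` forward to `Pᵢ`; (ii) the transport `∇ψᵢ`
realizes the squared Wasserstein distance `W₂(P̄, Pᵢ)²`; (iii) the gradients average to the
identity on the support of `P̄`; and (iv) the `ψᵢ` average to `‖x‖²/2` on the support of `P̄`. -/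
theorem stmt3 {d N : ℕ} (hN : 0 < N) (P : Fin N → MeasureTheory.Measure (Euc d))
    (hP : ∀ i, IsDiscreteProb (P i))
    (Pbar : MeasureTheory.Measure (Euc d)) (hPbar : IsBarycenter P Pbar) :
    ∃ ψ : Fin N → Euc d → ℝ,
      (∀ i, ConvexOn ℝ Set.univ (ψ i)) ∧
      (∀ i, ∀ x ∈ msupp Pbar, DifferentiableAt ℝ (ψ i) x) ∧
      (∀ i, Pbar.map (gradient (ψ i)) = P i) ∧
      (∀ i, ∫⁻ x, (‖x - gradient (ψ i) x‖₊ : ℝ≥0∞) ^ 2 ∂Pbar = W2sq Pbar (P i)) ∧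
      (∀ x ∈ msupp Pbar, (N : ℝ)⁻¹ • ∑ i, gradient (ψ i) x = x) ∧
      (∀ x ∈ msupp Pbar, (N : ℝ)⁻¹ * ∑ i, ψ i x = ‖x‖ ^ 2 / 2) := by
  classical
  have hprob : ∀ i, IsProbabilityMeasure (P i) := fun i => (hP i).1
  obtain ⟨hPb, hFSM, hmin⟩ := hPbar
  let A : Fin N → Finset (Euc d) := fun i => (hP i).2.toFinset
  have hA : ∀ i, ∀ᵐ y ∂P i, y ∈ A i := fun i => by
    simpa [A] using ae_mem_msupp (P i)
  have hA0 : ∀ i, (A i).Nonempty := fun i => (hA i).exists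
  let avg : (∀ i, A i) → Euc d := fun a => (N : ℝ)⁻¹ • ∑ j, (a j : Euc d)
  obtain ⟨φ₀, π, hπ, hπ1, hmarg, hφc, hφeq⟩ := kantorovich_duality hN (K := fun i => A i)
    (fun i b => (P i).real {b.1})
    (fun i b => ENNReal.toReal_pos
      (measure_singleton_ne_zero (hP i).2 ((hP i).2.mem_toFinset.1 b.2)) (measure_ne_top _ _))
    (fun i => by
      rw [Finset.sum_coe_sort (A i) (fun b => (P i).real {b})]
      have := integral_of_ae_mem_finset (hA i) (φ := fun _ => 1) measurable_const
      simpa using this.symm)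
    (fun a => ∑ i, ‖avg a - a i‖ ^ 2)
  let φ : Fin N → Euc d → ℝ := fun i y => if h : y ∈ A i then φ₀ i ⟨y, h⟩ else 0
  have hφ₀ : ∀ i (b : A i), φ i b = φ₀ i b := fun i b => by simp [φ]
  have hφ : ∀ i, Measurable (φ i) := fun i =>
    (measurable_const (a := (0 : ℝ))).measurable_of_countable_ne <|
      (A i).countable_toSet.mono fun y hy => by
        by_contra h
        have h' : y ∉ A i := h
        exact hy (by simp [φ, h'])
  have hφ_le : ∀ a : (∀ i, A i), ∑ i, φ i (a i) ≤ ∑ i, ‖avg a - a i‖ ^ 2 := fun a => by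
    simpa only [hφ₀] using hφc a
  -- By complementary slackness, the cost of `π` is the dual value.
  have hval : ∑ a, π a * ∑ i, ‖avg a - a i‖ ^ 2 = ∑ i, ∫ y, φ i y ∂P i := by
    have h1 : ∀ a, π a * ∑ i, ‖avg a - a i‖ ^ 2 = ∑ i, π a * φ₀ i (a i) := by
      intro a
      rw [← Finset.mul_sum]
      by_cases h : π a = 0
      · simp [h]
      · rw [hφeq a h]
    simp_rw [h1]
    rw [Finset.sum_comm]
    refine Finset.sum_congr rfl fun i _ => ?_
    rw [integral_of_ae_mem_finset (hA i) (hφ i),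
      ← Finset.sum_coe_sort (A i) (fun b => (P i).real {b} * φ i b)]
    simp_rw [← hmarg, hφ₀, Finset.sum_mul]
    rw [Finset.sum_comm]
    refine Finset.sum_congr rfl fun a _ => ?_
    simp [ite_mul]
  let u : Fin N → Euc d → ℝ := fun i x => ‖x‖ ^ 2 - 2 * maxPot (A i) (φ i) x
  have huc : ∀ i, Continuous (u i) := fun i => by
    have := continuous_maxPot (A i) (φ i)
    fun_prop
  have hui : ∀ i, Integrable (u i) Pbar := fun i =>
    ((memLp_id_two hFSM).integrable_norm_pow (by norm_num)).sub
      ((integrable_maxPot hFSM (hA0 i) (φ i)).const_mul 2)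
  have hu_eq : ∀ i x (b : Euc d), slack (A i) (φ i) (x, b) = 0 → u i x = ‖x - b‖ ^ 2 - φ i b := by
    intro i x b h
    simp only [slack] at h
    simp only [u]
    linarith
  have hu_ex : ∀ x, ∃ a : (∀ i, A i), ∀ i, slack (A i) (φ i) (x, a i) = 0 := by
    intro x
    have h : ∀ i, ∃ b : A i, slack (A i) (φ i) (x, b) = 0 := by
      intro i
      obtain ⟨b, hb, h⟩ := exists_eq_maxPot (hA0 i) (φ i) x
      exact ⟨⟨b, hb⟩, by rw [slack_eq, h]; ring⟩
    choose a ha using h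
    exact ⟨a, ha⟩
  have hu_ge : ∀ x (a : ∀ i, A i), (∀ i, slack (A i) (φ i) (x, a i) = 0) →
      N * ‖x - avg a‖ ^ 2 ≤ ∑ i, u i x := by
    intro x a ha
    rw [Finset.sum_congr rfl fun i _ => hu_eq i x _ (ha i), Finset.sum_sub_distrib,
      norm_sub_sq_eq hN]
    have := hφ_le a
    simp only [avg] at this ⊢
    linarith
  have hu_nonneg : ∀ x, 0 ≤ ∑ i, u i x := by
    intro x
    obtain ⟨a, ha⟩ := hu_ex x
    exact le_trans (by positivity) (hu_ge x a ha)
  let I : Fin N → ℝ := fun i => dualValue Pbar (P i) (A i) (φ i)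
  have hIW : ∀ i, ENNReal.ofReal (I i) ≤ W2sq Pbar (P i) := fun i =>
    dualValue_le_W2sq hFSM (hA i) (hA0 i) (hφ i)
  -- The dual values `I i` bound the squared distances from below and their sum is at least the total
  -- cost of the competitor `Q`, so for the barycenter `Pbar` every inequality is an equality.
  have hIsum : ∑ i, I i = ∫ x, ∑ i, u i x ∂Pbar + ∑ i, ∫ y, φ i y ∂P i := by
    rw [integral_finsetSum _ fun i _ => hui i, ← Finset.sum_add_distrib]
    rfl
  have hint0 : 0 ≤ ∫ x, ∑ i, u i x ∂Pbar := integral_nonneg hu_nonneg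
  obtain ⟨Q, hQ1, hQ2, hQ3⟩ := exists_sum_W2sq_le P A hA π hπ hπ1 hmarg
  have hWV := (hmin Q hQ1 hQ2).trans hQ3
  change _ ≤ ENNReal.ofReal (∑ a, π a * ∑ i, ‖avg a - a i‖ ^ 2) at hWV
  have hV0 : 0 ≤ ∑ a, π a * ∑ i, ‖avg a - a i‖ ^ 2 :=
    Finset.sum_nonneg fun a _ => mul_nonneg (hπ a) (by positivity)
  have hWfin : ∀ i, W2sq Pbar (P i) ≠ ⊤ := fun i =>
    (ENNReal.sum_lt_top.1 (hWV.trans_lt ENNReal.ofReal_lt_top) i (Finset.mem_univ i)).ne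
  have hIW' : ∀ i, I i ≤ (W2sq Pbar (P i)).toReal := fun i =>
    (ENNReal.ofReal_le_iff_le_toReal (hWfin i)).1 (hIW i)
  have hWV' : ∑ i, (W2sq Pbar (P i)).toReal ≤ ∑ i, ∫ y, φ i y ∂P i := by
    rw [← hval, ← ENNReal.toReal_sum fun i _ => hWfin i]
    exact ENNReal.toReal_le_of_le_ofReal hV0 hWV
  have hIle : ∑ i, I i ≤ ∑ i, (W2sq Pbar (P i)).toReal := Finset.sum_le_sum fun i _ => hIW' i
  have hint : ∫ x, ∑ i, u i x ∂Pbar = 0 := by linarith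
  have hIeq : ∀ i, I i = (W2sq Pbar (P i)).toReal := fun i =>
    (Finset.sum_eq_sum_iff_of_le fun i _ => hIW' i).1 (by linarith) i (Finset.mem_univ i)
  have hI0 : ∀ i, 0 ≤ I i := fun i => by rw [hIeq]; exact ENNReal.toReal_nonneg
  have hWI : ∀ i, W2sq Pbar (P i) = ENNReal.ofReal (I i) := fun i => by
    rw [hIeq, ENNReal.ofReal_toReal (hWfin i)]
  -- The function `∑ i, u i` is continuous and vanishes almost everywhere, hence on the support.
  have huzero : ∀ x ∈ msupp Pbar, ∑ i, u i x = 0 := by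
    intro x hx
    by_contra hne
    have hcont : Continuous fun x => ∑ i, u i x := continuous_finsetSum _ fun i _ => huc i
    have hae := (integral_eq_zero_iff_of_nonneg hu_nonneg
      (integrable_finsetSum _ fun i _ => hui i)).1 hint
    exact hx _ ((isOpen_ne_fun hcont continuous_const).mem_nhds hne) (ae_iff.1 hae)
  have havg : ∀ x ∈ msupp Pbar, ∀ a : (∀ i, A i), (∀ i, slack (A i) (φ i) (x, a i) = 0) →
      avg a = x := by
    intro x hx a ha
    have h := hu_ge x a ha
    rw [huzero x hx] at h
    have hNpos : (0 : ℝ) < N := by exact_mod_cast hN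
    have h2 : ‖x - avg a‖ ^ 2 = 0 := le_antisymm (by nlinarith) (by positivity)
    exact (sub_eq_zero.1 (norm_eq_zero.1 (pow_eq_zero_iff (by norm_num) |>.1 h2))).symm
  have hSfin : (msupp Pbar).Finite := (Set.finite_range avg).subset fun x hx => by
    obtain ⟨a, ha⟩ := hu_ex x
    exact ⟨a, havg x hx a ha⟩
  have huniq : ∀ x ∈ msupp Pbar, ∀ a : (∀ i, A i), (∀ i, slack (A i) (φ i) (x, a i) = 0) →
      ∀ i, ∀ b ∈ A i, slack (A i) (φ i) (x, b) = 0 → b = a i := by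
    intro x hx a ha i b hb h
    -- Replacing the `i`-th coordinate of `a` by `b` leaves the centroid equal to `x`.
    have h1 := havg x hx (Function.update a i ⟨b, hb⟩) fun j => by
      by_cases hj : j = i
      · subst hj; simpa using h
      · simpa [Function.update_of_ne hj] using ha j
    have h2 := havg x hx a ha
    have hN' : (N : ℝ)⁻¹ ≠ 0 := by positivity
    have h3 := smul_right_injective (Euc d) hN' (h1.trans h2.symm)
    rw [← Finset.add_sum_erase _ _ (Finset.mem_univ i),
      ← Finset.add_sum_erase _ (fun j => (a j : Euc d)) (Finset.mem_univ i),
      Finset.sum_congr rfl fun j hj => by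
        rw [Function.update_of_ne (Finset.ne_of_mem_erase hj)]] at h3
    rw [Function.update_self] at h3
    exact add_right_cancel h3
  have hgrad : ∀ x ∈ msupp Pbar, ∀ a : (∀ i, A i), (∀ i, slack (A i) (φ i) (x, a i) = 0) →
      ∀ i, HasGradientAt (maxPot (A i) (φ i)) (a i : Euc d) x := by
    intro x hx a ha i
    refine hasGradientAt_maxPot (φ i) (a i).2 fun b hb h => huniq x hx a ha i b hb ?_
    rw [slack_eq, h]; ring
  have hmap : ∀ i, Pbar.map (gradient (maxPot (A i) (φ i))) = P i := by
    intro i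
    refine map_eq_of_W2sq_eq hFSM (hA i) (hA0 i) (hφ i) (hWI i) (hI0 i)
      (measurable_gradient' _) hSfin (ae_mem_msupp Pbar) fun x hx y hy h => ?_
    obtain ⟨a, ha⟩ := hu_ex x
    rw [(hgrad x hx a ha i).gradient]
    exact huniq x hx a ha i y hy h
  refine ⟨fun i => maxPot (A i) (φ i), fun i => convexOn_maxPot (hA0 i) (φ i), ?_, hmap, ?_, ?_, ?_⟩
  · intro i x hx
    obtain ⟨a, ha⟩ := hu_ex x
    exact (hgrad x hx a ha i).differentiableAt
  · intro i
    rw [hWI]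
    refine cost_map_eq hFSM (hA i) (hA0 i) (hφ i) (measurable_gradient' _) (hmap i) ?_
    filter_upwards [ae_mem_msupp Pbar] with x hx
    obtain ⟨a, ha⟩ := hu_ex x
    rw [(hgrad x hx a ha i).gradient]
    exact ha i
  · intro x hx
    obtain ⟨a, ha⟩ := hu_ex x
    simp_rw [fun i => (hgrad x hx a ha i).gradient]
    exact havg x hx a ha
  · intro x hx
    have h := huzero x hx
    have hN' : (N : ℝ) ≠ 0 := by positivity
    simp only [u, Finset.sum_sub_distrib, Finset.sum_const, Finset.card_univ, Fintype.card_fin,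
      nsmul_eq_mul, ← Finset.mul_sum] at h
    field_simp
    linarith
end
end

section
/- Let P₁,…,P_N be discrete probability measures on ℝ^d and set Sᵢ = |supp(Pᵢ)|. Then there exists a barycenter P̄ of P₁,…,P_N with |supp(P̄)| ≤ Σᵢ₌₁ᴺ Sᵢ − N + 1. -/
/-!
The barycenter problem for finitely supported measures reduces to a finite linear program: minimize
`∑ x, w x * ∑ i, ‖avg x - x i‖ ^ 2` over weights `w` on tuples `x` of support points whose `i`-th
marginal is `P i`. The feasible weights form `multiPolytope`.

Pushing `w` forward under averaging gives a measure whose squared distances to the `P i` sum to at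
most the cost of `w`. Conversely, given any `Q` and couplings of `Q` with each `P i`, sampling
the atoms of the `P i` independently conditionally on `Q` gives feasible weights, and their cost is
at most the total transport cost because the mean minimizes the sum of squared distances
(`exists_glue`). Hence every minimizer of the linear program pushes forward to a barycenter.

The marginal constraints for one `P i` sum to the total mass, so the program is cut out by
`∑ i, (Sᵢ - 1) + 1` equations, and it has a minimizer with at most that many nonzero weights
(`exists_sparse_optimal`). The support of the corresponding barycenter is no larger.
-/

open MeasureTheory ENNReal

noncomputable section

/-! ### Sparse minimizers over the transportation polytope -/

/-- The simplex-method step behind sparse optima: nonnegative weights can be replaced, without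
changing the values of the constraints `A` and without increasing the objective `L`, by weights
supported on at most as many points as there are constraints. If the support is larger, it
carries a nonzero kernel vector of `A`; by `hA` that vector has a negative entry, so moving along
it until the first weight vanishes shrinks the support. -/
theorem reduce_support {X C : Type*} [Fintype X] [Fintype C]
    (A : (X → ℝ) →ₗ[ℝ] (C → ℝ)) (L : (X → ℝ) →ₗ[ℝ] ℝ)
    (hA : ∀ v, A v = 0 → ∑ x, v x = 0) (w : X → ℝ) (hw : ∀ x, 0 ≤ w x) :
    ∃ w' : X → ℝ, (∀ x, 0 ≤ w' x) ∧ A w' = A w ∧ L w' ≤ L w ∧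
      (Function.support w').ncard ≤ Fintype.card C := by
  classical
  induction hn : (Function.support w).ncard using Nat.strong_induction_on generalizing w with
  | _ n ih =>
  by_cases hle : (Function.support w).ncard ≤ Fintype.card C
  · exact ⟨w, hw, rfl, le_rfl, hle⟩
  push Not at hle
  let T := {x : X // w x ≠ 0}
  let E : (T → ℝ) →ₗ[ℝ] (X → ℝ) :=
    LinearMap.pi fun x => if h : w x ≠ 0 then LinearMap.proj (⟨x, h⟩ : T) else 0
  have hE1 : ∀ u : T → ℝ, ∀ x (h : w x ≠ 0), E u x = u ⟨x, h⟩ := by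
    intro u x h; simp only [E, LinearMap.pi_apply, dif_pos h, LinearMap.proj_apply]
  have hE2 : ∀ u : T → ℝ, ∀ x, w x = 0 → E u x = 0 := by
    intro u x h; simp [E, h]
  have hker : (A ∘ₗ E).ker ≠ ⊥ := by
    apply LinearMap.ker_ne_bot_of_finrank_lt
    rw [Module.finrank_fintype_fun_eq_card, Module.finrank_fintype_fun_eq_card]
    have hT : Fintype.card T = (Function.support w).ncard := by
      rw [← Nat.card_coe_set_eq, ← Nat.card_eq_fintype_card]; rfl
    rwa [hT]
  obtain ⟨u, hu, hu0⟩ := (Submodule.ne_bot_iff _).1 hker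
  have hAu : A (E u) = 0 := hu
  have hEu : E u ≠ 0 := by
    contrapose! hu0
    ext ⟨x, h⟩
    rw [← hE1 u x h, hu0]; rfl
  -- Replacing the kernel vector by its negative if necessary, the objective does not increase.
  obtain ⟨v, hAv, hv0, hvs, hLv⟩ : ∃ v : X → ℝ, A v = 0 ∧ v ≠ 0 ∧ (∀ x, w x = 0 → v x = 0) ∧
      L v ≤ 0 := by
    rcases le_total (L (E u)) 0 with h | h
    · exact ⟨E u, hAu, hEu, hE2 u, h⟩
    · refine ⟨-E u, by simp [hAu], by simpa using hEu, fun x hx => by simp [hE2 u x hx], by simpa using h⟩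
  have hneg : ∃ x, v x < 0 := by
    by_contra! h
    apply hv0
    have := (Finset.sum_eq_zero_iff_of_nonneg (fun x _ => h x)).1 (hA v hAv)
    ext x; exact this x (Finset.mem_univ x)
  obtain ⟨x₀, hx₀, hmin⟩ := Finset.exists_min_image (Finset.univ.filter fun x => v x < 0)
    (fun x => w x / (-v x)) (by obtain ⟨x, hx⟩ := hneg; exact ⟨x, by simpa using hx⟩)
  simp only [Finset.mem_filter, Finset.mem_univ, true_and] at hx₀ hmin
  set t := w x₀ / (-v x₀) with ht
  have ht0 : 0 ≤ t := div_nonneg (hw _) (by linarith)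
  have hnn : ∀ x, 0 ≤ (w + t • v) x := by
    intro x
    simp only [Pi.add_apply, Pi.smul_apply, smul_eq_mul]
    by_cases hx : v x < 0
    · have := hmin x hx
      rw [le_div_iff₀ (by linarith)] at this
      linarith
    · have := mul_nonneg ht0 (not_lt.1 hx)
      linarith [hw x]
  have hlt : (Function.support (w + t • v)).ncard < n := by
    rw [← hn]
    apply Set.ncard_lt_ncard _ (Set.toFinite _)
    refine ⟨fun x hx => ?_, fun hsub => ?_⟩
    · intro h0
      exact hx (by simp [h0, hvs x h0])
    · have h1 : x₀ ∈ Function.support w := fun h0 => hx₀.ne (hvs x₀ h0)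
      apply hsub h1
      simp only [Pi.add_apply, Pi.smul_apply, smul_eq_mul, ht]
      field_simp [hx₀.ne]
      ring
  obtain ⟨w', h1, h2, h3, h4⟩ := ih _ hlt (w + t • v) hnn rfl
  refine ⟨w', h1, by simp [h2, hAv], h3.trans ?_, h4⟩
  simp only [map_add, map_smul, smul_eq_mul]
  nlinarith

/-- Under the product of weight vectors `q j` of total mass one, the integral of a function of
the `i`-th coordinate is its integral under `q i`. Over `ℝ` this gives the independent coupling;
over `ℝ≥0∞` it is applied to conditional probabilities. -/
theorem sum_prod_marginal {ι R : Type*} [Fintype ι] [DecidableEq ι] [CommSemiring R]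
    {κ : ι → Type*} [∀ i, Fintype (κ i)] (q : ∀ i, κ i → R) (hq : ∀ i, ∑ s, q i s = 1)
    (i : ι) (g : κ i → R) :
    ∑ x : (∀ i, κ i), (∏ j, q j (x j)) * g (x i) = ∑ s, q i s * g s := by
  let G : ∀ j, κ j → R := Function.update (fun _ _ => 1) i g
  have hGi : G i = g := Function.update_self ..
  have hGj : ∀ j, j ≠ i → G j = fun _ => 1 := fun j hj => Function.update_of_ne hj ..
  have h1 := Fintype.prod_sum (fun j s => q j s * G j s)
  rw [Finset.prod_eq_single i (fun j _ hj => by simp [hGj j hj, hq]) (by simp), hGi] at h1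
  rw [h1]
  refine Finset.sum_congr rfl fun x _ => ?_
  rw [Finset.prod_mul_distrib, Finset.prod_eq_single (f := fun j => G j (x j)) i
    (fun j _ hj => by simp [hGj j hj]) (by simp), hGi]

/-- The transportation polytope: nonnegative weights of total mass one on tuples, whose
`i`-th marginal is `p i`. The total mass is prescribed separately because it does not follow
from the marginal constraints when there are no marginals at all. -/
def multiPolytope {ι : Type*} [Fintype ι] {κ : ι → Type*} [∀ i, Fintype (κ i)]
    [Fintype (∀ i, κ i)] [∀ i, DecidableEq (κ i)] (p : ∀ i, κ i → ℝ) : Set ((∀ i, κ i) → ℝ) :=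
  {w | (∀ x, 0 ≤ w x) ∧ ∑ x, w x = 1 ∧ ∀ i s, ∑ x, (if x i = s then w x else 0) = p i s}

/-- A linear cost attains its minimum over the transportation polytope at a point with at most
`∑ i, |κ i| - |ι| + 1` nonzero weights: this is the number of constraints left after dropping one
redundant marginal constraint for each `i`, and `reduce_support` applies to any minimizer. -/
theorem exists_sparse_optimal {ι : Type*} [Fintype ι] [DecidableEq ι] {κ : ι → Type*}
    [∀ i, Fintype (κ i)] [∀ i, Nonempty (κ i)] [∀ i, DecidableEq (κ i)]
    (p : ∀ i, κ i → ℝ) (hp0 : ∀ i s, 0 ≤ p i s) (hp1 : ∀ i, ∑ s, p i s = 1)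
    (c : (∀ i, κ i) → ℝ) :
    ∃ w ∈ multiPolytope p, (∀ w' ∈ multiPolytope p, ∑ x, w x * c x ≤ ∑ x, w' x * c x) ∧
      (Function.support w).ncard ≤ ∑ i, Fintype.card (κ i) - Fintype.card ι + 1 := by
  have hne : (multiPolytope p).Nonempty := by
    refine ⟨fun x => ∏ j, p j (x j), fun x => Finset.prod_nonneg fun j _ => hp0 _ _, ?_, ?_⟩
    · rw [← Fintype.prod_sum]; simp [hp1]
    · intro i s
      have := sum_prod_marginal p hp1 i (fun t => if t = s then 1 else 0)
      simpa using this
  have hcpt : IsCompact (multiPolytope p) := by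
    apply (isCompact_stdSimplex ℝ (∀ i, κ i)).of_isClosed_subset
    · have : multiPolytope p = (⋂ x, {w | 0 ≤ w x}) ∩ ({w | ∑ x, w x = 1} ∩
          ⋂ i, ⋂ s, {w | ∑ x, (if x i = s then w x else 0) = p i s}) := by
        ext w; simp [multiPolytope]
      rw [this]
      refine (isClosed_iInter fun x => isClosed_le (by fun_prop) (by fun_prop)).inter
        ((isClosed_eq (by fun_prop) (by fun_prop)).inter
        (isClosed_iInter fun i => isClosed_iInter fun s => isClosed_eq ?_ (by fun_prop)))
      refine continuous_finsetSum _ fun x _ => ?_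
      split_ifs <;> fun_prop
    · exact fun w hw => ⟨hw.1, hw.2.1⟩
  obtain ⟨w, hw, hmin⟩ := hcpt.exists_isMinOn hne
    (f := fun w => ∑ x, w x * c x) (by fun_prop)
  -- One marginal constraint per measure follows from the others and the total mass, so the one
  -- at `s₀ i` is dropped; `none` stands for the total mass.
  let s₀ : ∀ i, κ i := fun i => Classical.arbitrary _
  let C := Option (Σ i, {s : κ i // s ≠ s₀ i})
  let A : ((∀ i, κ i) → ℝ) →ₗ[ℝ] (C → ℝ) :=
    { toFun := fun w o => match o with
        | none => ∑ x, w x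
        | some ⟨i, s⟩ => ∑ x, (if x i = s.1 then w x else 0)
      map_add' := by
        intro v w; ext o
        rcases o with _ | ⟨i, s⟩
        · simp [Finset.sum_add_distrib]
        · simp only [Pi.add_apply, ← Finset.sum_add_distrib]
          refine Finset.sum_congr rfl fun x _ => ?_
          split_ifs <;> simp
      map_smul' := by
        intro a w; ext o
        rcases o with _ | ⟨i, s⟩
        · simp [Finset.mul_sum]
        · simp only [Pi.smul_apply, smul_eq_mul, Finset.mul_sum, RingHom.id_apply]
          refine Finset.sum_congr rfl fun x _ => ?_
          split_ifs <;> simp }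
  let L : ((∀ i, κ i) → ℝ) →ₗ[ℝ] ℝ :=
    { toFun := fun w => ∑ x, w x * c x
      map_add' := by intro v w; simp [add_mul, Finset.sum_add_distrib]
      map_smul' := by intro a w; simp [Finset.mul_sum, mul_assoc] }
  obtain ⟨w', h0, hA, hL, hcard⟩ := reduce_support A L
    (fun v hv => congrFun hv none) w hw.1
  have hmass : ∑ x, w' x = ∑ x, w x := congrFun hA none
  have hmarg : ∀ i (s : κ i), s ≠ s₀ i →
      ∑ x, (if x i = s then w' x else 0) = p i s := fun i s hs =>
    (congrFun hA (some ⟨i, s, hs⟩)).trans (hw.2.2 i s)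
  have htot : ∀ i, ∑ s, ∑ x, (if x i = s then w' x else 0) = ∑ x, w' x := by
    intro i; rw [Finset.sum_comm]; simp
  refine ⟨w', ⟨h0, hmass.trans hw.2.1, fun i s => ?_⟩, fun v hv => hL.trans (hmin hv), ?_⟩
  · by_cases hs : s = s₀ i
    · subst hs
      have h1 := htot i
      rw [hmass, hw.2.1, ← hp1 i, ← Finset.add_sum_erase _ _ (Finset.mem_univ (s₀ i)),
        ← Finset.add_sum_erase _ (p i) (Finset.mem_univ (s₀ i)),
        Finset.sum_congr rfl fun s hs => hmarg i s (Finset.ne_of_mem_erase hs)] at h1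
      exact add_right_cancel h1
    · exact hmarg i s hs
  · refine hcard.trans ?_
    rw [Fintype.card_option, Fintype.card_sigma]
    have h1 : ∀ i, Fintype.card {s : κ i // s ≠ s₀ i} + 1 = Fintype.card (κ i) := by
      intro i
      rw [Fintype.card_subtype_compl, Fintype.card_subtype_eq]
      exact Nat.sub_add_cancel Fintype.card_pos
    have h2 : ∑ i, Fintype.card {s : κ i // s ≠ s₀ i} + Fintype.card ι
        = ∑ i, Fintype.card (κ i) := by
      rw [← Finset.sum_congr rfl fun i _ => h1 i, Finset.sum_add_distrib]; simp
    omega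

/-! ### Finitely supported measures and the quadratic cost -/

theorem measure_compl_msupp {d : ℕ} (μ : Measure (Euc d)) : μ (msupp μ)ᶜ = 0 := by
  have : msupp μ = μ.support := by
    ext x
    simp [msupp, Measure.mem_support_iff_forall, pos_iff_ne_zero]
  rw [this]
  exact Measure.measure_compl_support

theorem lintegral_eq_sum {E : Type*} [MeasurableSpace E] [MeasurableSingletonClass E]
    {S : Set E} [Fintype S] {μ : Measure E} (hμ : μ Sᶜ = 0) (f : E → ℝ≥0∞) :
    ∫⁻ x, f x ∂μ = ∑ s : S, μ {(s : E)} * f s := by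
  have h : μ.restrict S = μ := Measure.restrict_eq_self_of_ae_mem (by simpa [ae_iff] using! hμ)
  rw [← h, lintegral_countable f (Set.toFinite S).countable, tsum_fintype, h]
  simp_rw [mul_comm]

theorem eq_sum_dirac {E : Type*} [MeasurableSpace E] [MeasurableSingletonClass E]
    {S : Set E} [Fintype S] {μ : Measure E} (hμ : μ Sᶜ = 0) :
    μ = ∑ s : S, μ {(s : E)} • Measure.dirac (s : E) := by
  refine Measure.ext_of_lintegral _ fun f hf => ?_
  rw [lintegral_eq_sum hμ f]
  simp [lintegral_finsetSum_measure, lintegral_smul_measure, lintegral_dirac' _ hf]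

theorem nnnorm_sq_eq_ofReal {E : Type*} [SeminormedAddCommGroup E] (x : E) :
    (‖x‖₊ : ℝ≥0∞) ^ 2 = ENNReal.ofReal (‖x‖ ^ 2) := by
  rw [ENNReal.ofReal_pow (norm_nonneg _), ofReal_norm, enorm_eq_nnnorm]

/-- The mean minimizes the sum of squared distances. -/
theorem sum_sq_avg_le {d N : ℕ} (x : Fin N → Euc d) (y : Euc d) :
    ∑ i, ‖avgMap d N x - x i‖ ^ 2 ≤ ∑ i, ‖y - x i‖ ^ 2 := by
  set a := avgMap d N x with ha
  have h0 : ∑ i, (a - x i) = 0 := by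
    rcases Nat.eq_zero_or_pos N with h | h
    · subst h; simp
    · rw [Finset.sum_sub_distrib, Finset.sum_const, Finset.card_univ, Fintype.card_fin, ha, avgMap,
        ← Nat.cast_smul_eq_nsmul ℝ, smul_smul, mul_inv_cancel₀ (by positivity), one_smul, sub_self]
  have h1 : ∀ i, ‖y - x i‖ ^ 2 = ‖y - a‖ ^ 2 + 2 * inner ℝ (y - a) (a - x i) + ‖a - x i‖ ^ 2 := by
    intro i
    rw [← norm_add_sq_real, sub_add_sub_cancel]
  simp_rw [h1, Finset.sum_add_distrib, ← Finset.mul_sum, ← inner_sum, h0, inner_zero_right]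
  have : 0 ≤ ∑ i : Fin N, ‖y - a‖ ^ 2 := Finset.sum_nonneg fun _ _ => by positivity
  linarith

/-! ### Wasserstein distances and the transportation polytope -/

/-- A lower bound valid for the total cost of every choice of couplings is a lower bound for
the sum of the squared Wasserstein distances. -/
theorem le_sum_W2sq {d N : ℕ} {P : Fin N → Measure (Euc d)} {Q : Measure (Euc d)} {b : ℝ≥0∞}
    (h : ∀ γ : Fin N → Measure (Euc d × Euc d), (∀ i, IsCoupling (γ i) Q (P i)) →
      b ≤ ∑ i, ∫⁻ p, (‖p.1 - p.2‖₊ : ℝ≥0∞) ^ 2 ∂(γ i)) :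
    b ≤ ∑ i, W2sq Q (P i) := by
  by_cases hne : ∀ i, ∃ γ, IsCoupling γ Q (P i)
  · have hW : ∀ i, ∃ γ : ℕ → Measure (Euc d × Euc d), (∀ n, IsCoupling (γ n) Q (P i)) ∧
        Filter.Tendsto (fun n => ∫⁻ p, (‖p.1 - p.2‖₊ : ℝ≥0∞) ^ 2 ∂(γ n)) Filter.atTop
          (nhds (W2sq Q (P i))) := by
      intro i
      obtain ⟨u, -, hu, hmem⟩ := exists_seq_tendsto_sInf
        (S := (fun γ : Measure (Euc d × Euc d) => ∫⁻ p, (‖p.1 - p.2‖₊ : ℝ≥0∞) ^ 2 ∂γ) ''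
          {γ | IsCoupling γ Q (P i)}) ((show Set.Nonempty _ from hne i).image _) (OrderBot.bddBelow _)
      choose γ hγ hγu using hmem
      refine ⟨γ, hγ, ?_⟩
      simp_rw [hγu]
      rw [sInf_image] at hu
      exact hu
    choose γ hγ hlim using hW
    exact ge_of_tendsto' (tendsto_finsetSum _ fun i _ => hlim i) fun n => h _ fun i => hγ i n
  · push Not at hne
    obtain ⟨i, hi⟩ := hne
    have : W2sq Q (P i) = ⊤ := by
      simp only [W2sq, iInf_eq_top]
      exact fun γ hγ => absurd hγ (hi γ)
    rw [ENNReal.sum_eq_top.2 ⟨i, Finset.mem_univ i, this⟩]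
    exact le_top

/-- Gluing: couplings `γ i` of a common `Q` with finitely supported `P i` yield, by making the
conditional laws given `Q` independent, a point of the transportation polytope whose cost is
at most the total cost of the `γ i`. -/
theorem exists_glue {d N : ℕ} {P : Fin N → Measure (Euc d)} {S : Fin N → Set (Euc d)}
    [∀ i, Fintype (S i)] [∀ i, DecidableEq (S i)] (hS : ∀ i, P i (S i)ᶜ = 0)
    {Q : Measure (Euc d)} [IsProbabilityMeasure Q]
    {γ : Fin N → Measure (Euc d × Euc d)} (hγ : ∀ i, IsCoupling (γ i) Q (P i)) :
    ∃ w ∈ multiPolytope (fun i (s : S i) => (P i).real {(s : Euc d)}),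
      ENNReal.ofReal (∑ x, w x * ∑ i, ‖avgMap d N (fun j => x j) - x i‖ ^ 2)
        ≤ ∑ i, ∫⁻ p, (‖p.1 - p.2‖₊ : ℝ≥0∞) ^ 2 ∂(γ i) := by
  have hprob : ∀ i, IsProbabilityMeasure (γ i) := fun i =>
    (Measure.isProbabilityMeasure_map_iff (f := Prod.fst) measurable_fst.aemeasurable).1
      (by rw [(hγ i).1]; infer_instance)
  have hfst : ∀ i, (γ i).fst = Q := fun i => (hγ i).1
  have hSm : ∀ i, MeasurableSet (S i) := fun i => (Set.toFinite (S i)).measurableSet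
  -- Conditional probability, under `γ i`, of the atom `s` of `P i` given the first coordinate `y`.
  let q : Euc d → ∀ i, S i → ℝ≥0∞ := fun y i s => (γ i).condKernel y {(s : Euc d)}
  have hqm : ∀ i s, Measurable fun y => q y i s := fun i s =>
    ((γ i).condKernel).measurable_coe (measurableSet_singleton _)
  have hconc : ∀ᵐ y ∂Q, ∀ i, (γ i).condKernel y (S i)ᶜ = 0 := by
    rw [ae_all_iff]
    intro i
    have h := Measure.setLIntegral_condKernel_eq_measure_prod (ρ := γ i) MeasurableSet.univ
      (hSm i).compl
    rw [Set.univ_prod, ← Measure.map_apply measurable_snd (hSm i).compl, (hγ i).2, hS i,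
      setLIntegral_univ, hfst i, lintegral_eq_zero_iff
        (((γ i).condKernel).measurable_coe (hSm i).compl)] at h
    exact h
  have hq1 : ∀ᵐ y ∂Q, ∀ i, ∑ s, q y i s = 1 := by
    filter_upwards [hconc] with y hy i
    have := lintegral_eq_sum (hy i) (fun _ => 1)
    simpa using this.symm
  have hqP : ∀ i (s : S i), ∫⁻ y, q y i s ∂Q = P i {(s : Euc d)} := by
    intro i s
    have h := Measure.setLIntegral_condKernel_eq_measure_prod (ρ := γ i) MeasurableSet.univ
      (measurableSet_singleton (s : Euc d))
    rwa [Set.univ_prod, ← Measure.map_apply measurable_snd (measurableSet_singleton _), (hγ i).2,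
      setLIntegral_univ, hfst i] at h
  have hprodm : ∀ x : (∀ i, S i), Measurable fun y => ∏ i, q y i (x i) := fun x =>
    Finset.measurable_prod _ fun i _ => hqm i _
  let W : (∀ i, S i) → ℝ≥0∞ := fun x => ∫⁻ y, ∏ i, q y i (x i) ∂Q
  have hWsum : ∑ x, W x = 1 := by
    rw [← lintegral_finsetSum _ fun x _ => hprodm x, ← measure_univ (μ := Q), ← lintegral_one]
    refine lintegral_congr_ae ?_
    filter_upwards [hq1] with y hy
    rw [← Fintype.prod_sum]; simp [hy]
  have hWtop : ∀ x, W x ≠ ⊤ := fun x =>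
    ((Finset.single_le_sum (fun _ _ => zero_le) (Finset.mem_univ x)).trans_lt
      (hWsum ▸ one_lt_top)).ne
  have hWmarg : ∀ i s, ∑ x, (if x i = s then W x else 0) = P i {(s : Euc d)} := by
    intro i s
    have : ∀ x : (∀ i, S i), (if x i = s then W x else 0)
        = ∫⁻ y, (∏ i, q y i (x i)) * (if x i = s then 1 else 0) ∂Q := by
      intro x; split_ifs <;> simp [W]
    simp_rw [this]
    rw [← lintegral_finsetSum _ fun x _ => (hprodm x).mul_const _, ← hqP]
    refine lintegral_congr_ae ?_
    filter_upwards [hq1] with y hy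
    have := sum_prod_marginal (q y) hy i (fun t => if t = s then 1 else 0)
    simpa using this
  refine ⟨fun x => (W x).toReal, ⟨fun x => ENNReal.toReal_nonneg, ?_, fun i s => ?_⟩, ?_⟩
  · rw [← ENNReal.toReal_sum fun x _ => hWtop x, hWsum, ENNReal.toReal_one]
  · change _ = (P i {(s : Euc d)}).toReal
    rw [← hWmarg i s, ENNReal.toReal_sum]
    · exact Finset.sum_congr rfl fun x _ => by split_ifs <;> simp
    · intro x _; split_ifs <;> simp [hWtop]
  have hcost : ∀ i, ∫⁻ p, (‖p.1 - p.2‖₊ : ℝ≥0∞) ^ 2 ∂(γ i)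
      = ∫⁻ y, ∑ s, q y i s * (‖y - s‖₊ : ℝ≥0∞) ^ 2 ∂Q := by
    intro i
    rw [← Measure.lintegral_condKernel (by fun_prop), hfst i]
    refine lintegral_congr_ae ?_
    filter_upwards [hconc] with y hy
    exact lintegral_eq_sum (hy i) _
  calc ENNReal.ofReal (∑ x, (W x).toReal * ∑ i, ‖avgMap d N (fun j => x j) - x i‖ ^ 2)
      = ∑ x, W x * ENNReal.ofReal (∑ i, ‖avgMap d N (fun j => x j) - x i‖ ^ 2) := by
        rw [ENNReal.ofReal_sum_of_nonneg fun x _ => by positivity]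
        refine Finset.sum_congr rfl fun x _ => ?_
        rw [ENNReal.ofReal_mul ENNReal.toReal_nonneg, ENNReal.ofReal_toReal (hWtop x)]
    _ = ∫⁻ y, ∑ x : (∀ i, S i), (∏ i, q y i (x i)) *
          ENNReal.ofReal (∑ i, ‖avgMap d N (fun j => x j) - x i‖ ^ 2) ∂Q := by
        rw [lintegral_finsetSum _ fun x _ => (hprodm x).mul_const _]
        exact Finset.sum_congr rfl fun x _ => (lintegral_mul_const _ (hprodm x)).symm
    _ ≤ ∫⁻ y, ∑ i, ∑ s, q y i s * (‖y - s‖₊ : ℝ≥0∞) ^ 2 ∂Q := by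
        refine lintegral_mono_ae ?_
        filter_upwards [hq1] with y hy
        calc _ ≤ ∑ x : (∀ i, S i), (∏ i, q y i (x i)) *
                ∑ i, (‖y - x i‖₊ : ℝ≥0∞) ^ 2 := by
              gcongr with x
              simp_rw [nnnorm_sq_eq_ofReal]
              rw [← ENNReal.ofReal_sum_of_nonneg fun i _ => by positivity]
              exact ENNReal.ofReal_le_ofReal (sum_sq_avg_le _ _)
          _ = _ := by
              simp_rw [Finset.mul_sum]
              rw [Finset.sum_comm]
              exact Finset.sum_congr rfl fun i _ =>
                sum_prod_marginal (q y) hy i fun s => (‖y - s‖₊ : ℝ≥0∞) ^ 2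
    _ = ∑ i, ∫⁻ p, (‖p.1 - p.2‖₊ : ℝ≥0∞) ^ 2 ∂(γ i) := by
        simp_rw [hcost]
        refine lintegral_finsetSum _ fun i _ => Finset.measurable_sum _ fun s _ => (hqm i s).mul ?_
        fun_prop

/-- there always exists a barycenter of the discrete probability measures
`P₁, …, P_N` whose support has cardinality at most `Σᵢ |supp(Pᵢ)| - N + 1`. -/
theorem stmt4 {d N : ℕ} (P : Fin N → MeasureTheory.Measure (Euc d))
    (hP : ∀ i, IsDiscreteProb (P i)) :
    ∃ Pbar : MeasureTheory.Measure (Euc d), IsBarycenter P Pbar ∧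
      (msupp Pbar).ncard ≤ (∑ i, (msupp (P i)).ncard) - N + 1 := by
  classical
  have : ∀ i, IsProbabilityMeasure (P i) := fun i => (hP i).1
  have : ∀ i, Fintype (msupp (P i)) := fun i => (hP i).2.fintype
  have hS : ∀ i, P i (msupp (P i))ᶜ = 0 := fun i => measure_compl_msupp (P i)
  have : ∀ i, Nonempty (msupp (P i)) := by
    intro i
    by_contra h
    have h1 := hS i
    rw [Set.nonempty_coe_sort, Set.not_nonempty_iff_eq_empty] at h
    simp [h] at h1
  let p : ∀ i, msupp (P i) → ℝ := fun i s => (P i).real {(s : Euc d)}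
  have hp1 : ∀ i, ∑ s, p i s = 1 := by
    intro i
    have h := lintegral_eq_sum (hS i) (fun _ => 1)
    simp only [lintegral_one, measure_univ, mul_one] at h
    simp only [p, Measure.real]
    rw [← ENNReal.toReal_sum (by simp), ← h, ENNReal.toReal_one]
  let m : (∀ i, msupp (P i)) → Euc d := fun x => avgMap d N fun j => x j
  obtain ⟨w, hw, hopt, hcard⟩ := exists_sparse_optimal p (fun i s => measureReal_nonneg) hp1
    (fun x => ∑ i, ‖m x - x i‖ ^ 2)
  obtain ⟨hw0, hw1, hwm⟩ := hw
  let Pbar : Measure (Euc d) := ∑ x, ENNReal.ofReal (w x) • Measure.dirac (m x)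
  have hint : ∀ f : Euc d → ℝ≥0∞, ∫⁻ y, f y ∂Pbar = ∑ x, ENNReal.ofReal (w x) * f (m x) := by
    intro f
    simp [Pbar, lintegral_finsetSum_measure, lintegral_smul_measure]
  have hmass : ∑ x, ENNReal.ofReal (w x) = 1 := by
    rw [← ENNReal.ofReal_sum_of_nonneg fun x _ => hw0 x, hw1, ENNReal.ofReal_one]
  refine ⟨Pbar, ⟨⟨?_⟩, ?_, fun Q hQ _ => ?_⟩, ?_⟩
  · rw [← lintegral_one, hint]; simpa using hmass
  · rw [FinSecondMoment, hint]
    exact ENNReal.sum_lt_top.2 fun x _ => ENNReal.mul_lt_top ofReal_lt_top (by simp)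
  · have hupper : ∀ i, W2sq Pbar (P i)
        ≤ ∑ x, ENNReal.ofReal (w x) * ENNReal.ofReal (‖m x - x i‖ ^ 2) := by
      intro i
      -- The joint law of the average and the `i`-th coordinate under `w`.
      let γ : Measure (Euc d × Euc d) :=
        ∑ x, ENNReal.ofReal (w x) • Measure.dirac (m x, (x i : Euc d))
      have hγint : ∀ f : Euc d × Euc d → ℝ≥0∞,
          ∫⁻ z, f z ∂γ = ∑ x, ENNReal.ofReal (w x) * f (m x, x i) := by
        intro f
        simp [γ, lintegral_finsetSum_measure, lintegral_smul_measure]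
      have hγ : IsCoupling γ Pbar (P i) := by
        constructor
        · refine Measure.ext_of_lintegral _ fun f hf => ?_
          rw [lintegral_map hf measurable_fst, hγint, hint]
        · refine Measure.ext_of_lintegral _ fun f hf => ?_
          rw [lintegral_map hf measurable_snd, hγint, lintegral_eq_sum (hS i) f]
          have h : ∀ s : msupp (P i),
              P i {(s : Euc d)} = ∑ x, if x i = s then ENNReal.ofReal (w x) else 0 := by
            intro s
            rw [← ENNReal.ofReal_toReal (measure_ne_top (P i) {(s : Euc d)})]
            rw [show (P i {(s : Euc d)}).toReal = p i s from rfl, ← hwm i s,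
              ENNReal.ofReal_sum_of_nonneg fun x _ => by split_ifs <;> simp [hw0]]
            exact Finset.sum_congr rfl fun x _ => by split_ifs <;> simp
          simp_rw [h, Finset.sum_mul]
          rw [Finset.sum_comm]
          simp [ite_mul]
      refine (iInf₂_le γ hγ).trans_eq ?_
      rw [hγint]
      simp_rw [nnnorm_sq_eq_ofReal]
    calc ∑ i, W2sq Pbar (P i)
        ≤ ∑ i, ∑ x, ENNReal.ofReal (w x) * ENNReal.ofReal (‖m x - x i‖ ^ 2) :=
          Finset.sum_le_sum fun i _ => hupper i
      _ = ENNReal.ofReal (∑ x, w x * ∑ i, ‖m x - x i‖ ^ 2) := by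
          rw [Finset.sum_comm, ENNReal.ofReal_sum_of_nonneg fun x _ =>
            mul_nonneg (hw0 x) (Finset.sum_nonneg fun i _ => by positivity)]
          refine Finset.sum_congr rfl fun x _ => ?_
          rw [ENNReal.ofReal_mul (hw0 x), ENNReal.ofReal_sum_of_nonneg fun i _ => by positivity,
            Finset.mul_sum]
      _ ≤ ∑ i, W2sq Q (P i) := by
          refine le_sum_W2sq fun γ hγ => ?_
          obtain ⟨w', hw', hle⟩ := exists_glue hS hγ
          exact (ENNReal.ofReal_le_ofReal (hopt w' hw')).trans hle
  · -- The finite set of averages is closed and its complement is `Pbar`-null.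
    have hsub : msupp Pbar ⊆ m '' Function.support w := by
      intro y hy
      by_contra hn
      have hfin : (m '' Function.support w).Finite := Set.toFinite _
      refine hy _ (hfin.isClosed.isOpen_compl.mem_nhds hn) ?_
      rw [← lintegral_indicator_one hfin.measurableSet.compl, hint]
      refine Finset.sum_eq_zero fun x _ => ?_
      by_cases hx : w x = 0
      · simp [hx]
      · have : m x ∈ m '' Function.support w := ⟨x, hx, rfl⟩
        simp [this]
    calc (msupp Pbar).ncard ≤ (m '' Function.support w).ncard :=
          Set.ncard_le_ncard hsub (Set.toFinite _)
      _ ≤ (Function.support w).ncard := Set.ncard_image_le (Set.toFinite _)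
      _ ≤ _ := hcard
      _ = _ := by
          rw [Fintype.card_fin]
          congr 2
          exact Finset.sum_congr rfl fun i _ => by
            rw [← Nat.card_coe_set_eq, Nat.card_eq_fintype_card]
end
end

section
/- Let e₀ ∈ ℝ^d, let e₁,…,e_d ∈ ℝ^d be linearly independent, let L₁,…,L_d ≥ 2 be integers, and let G = {e₀ + Σₛ₌₁^d (lₛ/(Lₛ−1)) eₛ : lₛ ∈ ℤ, 0 ≤ lₛ ≤ Lₛ−1} be the corresponding L₁×⋯×L_d uniform grid. If the discrete probability measures P₁,…,P_N are all supported in G, then there exists a barycenter P̄ of P₁,…,P_N supported in the refined (N(L₁−1)+1)×⋯×(N(L_d−1)+1) uniform grid G' = {e₀ + Σₛ₌₁^d (lₛ/(N(Lₛ−1))) eₛ : lₛ ∈ ℤ, 0 ≤ lₛ ≤ N(Lₛ−1)}, with |supp(P̄)| ≤ N(∏ₛ₌₁^d Lₛ − 1) + 1. -/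
/-!
The barycenter problem is equivalent to a multi-marginal transport problem. Since all `P i` live
on the finite grid, this problem is a linear program: minimise the cost `tupleCost`, the sum of
squared distances of the points of a tuple to their mean, over plans, that is, weights on
`N`-tuples of grid points whose marginals are the `P i`.

* The push-forward of a plan under the mean map has barycenter objective at most the cost of the
  plan (`sum_W2sq_planMean_le`).
* Conversely, for any `Q`, almost optimal couplings of `Q` with the `P i` can be glued along `Q`
  to a plan that costs no more, because the mean minimises the sum of squared distances
  (`exists_plan_of_couplings`, `le_sum_W2sq`).

Hence the push-forward of an optimal plan is a barycenter. It is supported on means of `N` grid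
points, which form the refined grid. For the support bound, discard in each marginal the
constraint at one grid point, which is implied by the others and the total mass. The program then
has `N * (∏ s, L s - 1) + 1` constraints, and some optimal solution has at most that many nonzero
weights (`lp_exists`): otherwise there is a kernel direction of the constraints within the support
along which the support can be shrunk without raising the cost (`lp_reduce`).
-/

open MeasureTheory ENNReal

noncomputable section

/-! ### Linear programs with few constraints -/

/-- A feasible point of a linear program with more nonzero coordinates than constraints can be
replaced by one that is no more expensive and has a smaller support. The constraint `j₀` fixes
the total mass. -/
lemma lp_reduce {X C : Type*} [Fintype X] [Fintype C] (A : C → X → ℝ) (c : X → ℝ)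
    (j₀ : C) (hj₀ : ∀ x, A j₀ x = 1) (w : X → ℝ) (hw : ∀ x, 0 ≤ w x)
    (hcard : Fintype.card C < (Finset.univ.filter fun x => w x ≠ 0).card) :
    ∃ w' : X → ℝ, (∀ x, 0 ≤ w' x) ∧ (∀ j, ∑ x, A j x * w' x = ∑ x, A j x * w x) ∧
      ∑ x, c x * w' x ≤ ∑ x, c x * w x ∧
      (Finset.univ.filter fun x => w' x ≠ 0).card <
        (Finset.univ.filter fun x => w x ≠ 0).card := by
  classical
  -- more columns than rows: a nonzero `z` in the kernel, supported in the support of `w`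
  have hz : ∃ z : X → ℝ, z ≠ 0 ∧ (∀ x, w x = 0 → z x = 0) ∧ ∀ j, ∑ x, A j x * z x = 0 := by
    let S := Finset.univ.filter fun x => w x ≠ 0
    let T : (S → ℝ) →ₗ[ℝ] (C → ℝ) := Matrix.mulVecLin (Matrix.of fun j (x : S) => A j x)
    have hT : LinearMap.ker T ≠ ⊥ := by
      apply LinearMap.ker_ne_bot_of_finrank_lt
      rwa [Module.finrank_fintype_fun_eq_card, Module.finrank_fintype_fun_eq_card, Fintype.card_coe]
    obtain ⟨z, hzk, hz0⟩ := (Submodule.ne_bot_iff _).1 hT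
    refine ⟨fun x => if h : x ∈ S then z ⟨x, h⟩ else 0, ?_, ?_, ?_⟩
    · intro h
      apply hz0
      ext x
      have := congrFun h x
      simpa using this
    · intro x hx
      simp [S, hx]
    · intro j
      have h1 := congrFun (LinearMap.mem_ker.1 hzk) j
      simp only [T, Matrix.mulVecLin_apply, Matrix.mulVec, dotProduct, Matrix.of_apply,
        Pi.zero_apply] at h1
      refine Eq.trans ?_ h1
      rw [← Finset.sum_subset (Finset.subset_univ S), ← Finset.sum_coe_sort S]
      · apply Finset.sum_congr rfl
        intro x _
        simp
      · intro x _ hx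
        simp only [dif_neg hx, mul_zero]
  -- after a change of sign, `z` does not increase the cost
  have hdesc : ∃ z : X → ℝ, z ≠ 0 ∧ (∀ x, w x = 0 → z x = 0) ∧ (∀ j, ∑ x, A j x * z x = 0) ∧
      ∑ x, c x * z x ≤ 0 := by
    obtain ⟨z, h0, h1, h2⟩ := hz
    rcases le_total (∑ x, c x * z x) 0 with h | h
    · exact ⟨z, h0, h1, h2, h⟩
    · refine ⟨-z, neg_ne_zero.2 h0, fun x hx => by simp [h1 x hx], fun j => ?_, ?_⟩
      · simp [h2 j]
      · simpa using h
  obtain ⟨z, h0, h1, h2, h3⟩ := hdesc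
  -- the total mass row forces `z` to take negative values
  have hneg : ∃ x, z x < 0 := by
    by_contra! h
    have hs := h2 j₀
    simp only [hj₀, one_mul] at hs
    rw [Finset.sum_eq_zero_iff_of_nonneg fun x _ => h x] at hs
    exact h0 (funext fun x => hs x (Finset.mem_univ x))
  -- move from `w` along `z` until the first coordinate vanishes
  obtain ⟨x₀, hx₀, hmin⟩ := Finset.exists_min_image (Finset.univ.filter fun x => z x < 0)
    (fun x => w x / (-z x)) (by obtain ⟨x, hx⟩ := hneg; exact ⟨x, by simpa using hx⟩)
  simp only [Finset.mem_filter, Finset.mem_univ, true_and] at hx₀ hmin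
  set t := w x₀ / (-z x₀) with ht
  have ht0 : 0 ≤ t := div_nonneg (hw _) (by linarith)
  have hx₀t : w x₀ + t * z x₀ = 0 := by
    rw [ht, div_neg, neg_mul, div_mul_cancel₀ _ hx₀.ne, add_neg_cancel]
  refine ⟨fun x => w x + t * z x, fun x => ?_, fun j => ?_, ?_, ?_⟩
  · rcases lt_or_ge (z x) 0 with h | h
    · have := hmin x h
      rw [le_div_iff₀ (by linarith)] at this
      linarith
    · have := hw x
      positivity
  · have : ∀ x, A j x * (w x + t * z x) = A j x * w x + t * (A j x * z x) := fun x => by ring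
    simp only [this, Finset.sum_add_distrib, ← Finset.mul_sum, h2 j]
    simp
  · have : ∀ x, c x * (w x + t * z x) = c x * w x + t * (c x * z x) := fun x => by ring
    simp only [this, Finset.sum_add_distrib, ← Finset.mul_sum]
    nlinarith
  · apply Finset.card_lt_card
    rw [Finset.ssubset_iff_of_subset]
    · refine ⟨x₀, ?_, by simpa using hx₀t⟩
      simp only [Finset.mem_filter, Finset.mem_univ, true_and]
      intro h
      exact hx₀.ne (h1 _ h)
    · intro x
      simp only [Finset.mem_filter, Finset.mem_univ, true_and]
      intro h hx
      exact h (by simp [hx, h1 x hx])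

/-- A feasible linear program of fixed total mass has an optimal solution with at most as many
nonzero coordinates as there are constraints. -/
lemma lp_exists {X C : Type*} [Fintype X] [Fintype C] (A : C → X → ℝ) (b : C → ℝ) (c : X → ℝ)
    (j₀ : C) (hj₀ : ∀ x, A j₀ x = 1)
    (hne : ∃ w : X → ℝ, (∀ x, 0 ≤ w x) ∧ ∀ j, ∑ x, A j x * w x = b j) :
    ∃ w : X → ℝ, ((∀ x, 0 ≤ w x) ∧ ∀ j, ∑ x, A j x * w x = b j) ∧
      (∀ w' : X → ℝ, (∀ x, 0 ≤ w' x) → (∀ j, ∑ x, A j x * w' x = b j) →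
        ∑ x, c x * w x ≤ ∑ x, c x * w' x) ∧
      (Finset.univ.filter fun x => w x ≠ 0).card ≤ Fintype.card C := by
  classical
  let K : Set (X → ℝ) := {w | (∀ x, 0 ≤ w x) ∧ ∀ j, ∑ x, A j x * w x = b j}
  have hclosed : IsClosed K := by
    apply IsClosed.inter
    · show IsClosed {w : X → ℝ | ∀ x, 0 ≤ w x}
      simp only [Set.ofPred_forall]
      exact isClosed_iInter fun x => isClosed_le continuous_const (continuous_apply x)
    · show IsClosed {w : X → ℝ | ∀ j, ∑ x, A j x * w x = b j}
      simp only [Set.ofPred_forall]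
      exact isClosed_iInter fun j => isClosed_eq (by fun_prop) continuous_const
  have hsub : K ⊆ Set.Icc 0 (fun _ => b j₀) := by
    rintro w ⟨h1, h2⟩
    refine ⟨h1, fun x => ?_⟩
    have := h2 j₀
    simp only [hj₀, one_mul] at this
    rw [← this]
    exact Finset.single_le_sum (fun y _ => h1 y) (Finset.mem_univ x)
  have hK : IsCompact K := isCompact_Icc.of_isClosed_subset hclosed hsub
  obtain ⟨w₀, hw₀, hmin⟩ := hK.exists_isMinOn (f := fun w => ∑ x, c x * w x) hne (by fun_prop)
  -- among all minimizers, one with the smallest support is as required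
  let M : Set (X → ℝ) := {w | w ∈ K ∧ ∑ x, c x * w x ≤ ∑ x, c x * w₀ x}
  obtain ⟨w, hw, hwmin⟩ := exists_minimalFor_of_wellFoundedLT (fun w => w ∈ M)
    (fun w : X → ℝ => (Finset.univ.filter fun x => w x ≠ 0).card) ⟨w₀, hw₀, le_rfl⟩
  refine ⟨w, hw.1, fun w' h1 h2 => hw.2.trans (hmin ⟨h1, h2⟩), ?_⟩
  by_contra! hcard
  obtain ⟨w', h1, h2, h3, h4⟩ := lp_reduce A c j₀ hj₀ w hw.1.1 hcard
  have := hwmin (j := w') ⟨⟨h1, fun j => (h2 j).trans (hw.1.2 j)⟩, h3.trans hw.2⟩ h4.le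
  exact absurd this (not_le.2 h4)

/-! ### Finite sums, supports and couplings -/

/-- The expectation of a function of the `i`-th coordinate under a product of weights `f j`. -/
lemma sum_prod_mul_apply {R ι I : Type*} [CommSemiring R] [Fintype ι] [DecidableEq ι] [Fintype I]
    (f : ι → I → R) (hf : ∀ i, ∑ k, f i k = 1) (i : ι) (h : I → R) :
    ∑ x : ι → I, (∏ j, f j (x j)) * h (x i) = ∑ k, f i k * h k := by
  classical
  -- expand the product over `j` of `∑ k, f j k`, with the `i`-th factor weighted by `h`
  have key := Fintype.piFinset_univ (α := ι) (β := fun _ => I) ▸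
    Finset.prod_univ_sum (fun _ : ι => (Finset.univ : Finset I))
      (fun j k => f j k * if j = i then h k else 1)
  simp only [Finset.prod_mul_distrib, Finset.prod_ite_eq', Finset.mem_univ, if_true] at key
  rw [← key, Finset.prod_eq_single i]
  · simp
  · intro j _ hj
    simp [hj, hf]
  · simp

lemma measure_compl_eq_zero_of_msupp_subset {d : ℕ} {μ : Measure (Euc d)} {S : Set (Euc d)}
    (h : msupp μ ⊆ S) : μ Sᶜ = 0 := by
  apply measure_null_of_locally_null
  intro x hx
  have hx' : x ∉ msupp μ := fun h' => hx (h h')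
  simp only [msupp, Set.mem_ofPred_eq, not_forall, not_not] at hx'
  obtain ⟨U, hU, h0⟩ := hx'
  exact ⟨U, mem_nhdsWithin_of_mem_nhds hU, h0⟩

lemma msupp_subset_of_finite {d : ℕ} {μ : Measure (Euc d)} {S : Set (Euc d)} (hS : S.Finite)
    (h : μ Sᶜ = 0) : msupp μ ⊆ S := by
  intro x hx
  by_contra hxS
  exact hx Sᶜ (hS.isClosed.isOpen_compl.mem_nhds hxS) h

lemma setLIntegral_range {E I : Type*} [MeasurableSpace E] [MeasurableSingletonClass E] [Fintype I]
    {g : I → E} (hg : Function.Injective g) (μ : Measure E) (F : E → ℝ≥0∞) :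
    ∫⁻ y in Set.range g, F y ∂μ = ∑ k, F (g k) * μ {g k} := by
  classical
  have : Set.range g = ((Finset.univ.image g : Finset E) : Set E) := by simp
  rw [this, lintegral_finset, Finset.sum_image fun _ _ _ _ h => hg h]

lemma measure_eq_sum_dirac {E I : Type*} [MeasurableSpace E] [MeasurableSingletonClass E]
    [Fintype I] {g : I → E} (hg : Function.Injective g) (μ : Measure E)
    (h : μ (Set.range g)ᶜ = 0) : μ = ∑ k, μ {g k} • Measure.dirac (g k) := by
  ext s hs
  have h1 := setLIntegral_range hg μ (s.indicator 1)
  have h2 : μ.restrict (Set.range g) = μ := Measure.restrict_eq_self_of_ae_mem h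
  rw [h2, lintegral_indicator_one hs] at h1
  rw [h1, Measure.finsetSum_apply]
  simp [hs, mul_comm]

/-- The mean minimizes the sum of squared distances. -/
lemma sum_sq_dist_mean_le {E : Type*} [NormedAddCommGroup E] [InnerProductSpace ℝ E] {N : ℕ}
    (a : Fin N → E) (y : E) :
    ∑ i, ‖(N : ℝ)⁻¹ • ∑ j, a j - a i‖ ^ 2 ≤ ∑ i, ‖y - a i‖ ^ 2 := by
  set m := (N : ℝ)⁻¹ • ∑ j, a j with hm
  have h0 : ∑ i, (m - a i) = 0 := by
    rcases Nat.eq_zero_or_pos N with rfl | hN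
    · simp
    · have : (N : ℝ) ≠ 0 := by positivity
      rw [Finset.sum_sub_distrib, Finset.sum_const, Finset.card_univ, Fintype.card_fin,
        ← Nat.cast_smul_eq_nsmul ℝ, hm, smul_smul, mul_inv_cancel₀ this, one_smul, sub_self]
  have h1 : ∀ i, ‖y - a i‖ ^ 2 = ‖y - m‖ ^ 2 + 2 * inner ℝ (y - m) (m - a i) + ‖m - a i‖ ^ 2 := by
    intro i
    rw [← norm_add_sq_real, sub_add_sub_cancel]
  simp only [h1, Finset.sum_add_distrib, ← Finset.mul_sum, ← inner_sum, h0, inner_zero_right]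
  have : 0 ≤ ∑ i : Fin N, ‖y - m‖ ^ 2 := Finset.sum_nonneg fun _ _ => by positivity
  linarith

lemma enorm_sq_eq_ofReal {E : Type*} [NormedAddCommGroup E] (v : E) :
    (‖v‖₊ : ℝ≥0∞) ^ 2 = ENNReal.ofReal (‖v‖ ^ 2) := by
  rw [ENNReal.ofReal_pow (norm_nonneg v), ofReal_norm, enorm_eq_nnnorm]

/-- Disintegration of a coupling of `Q` and `P` over `Q`, where `P` lives on the range of `g`:
`f k y` is the conditional probability of `g k` given `y`. -/
lemma exists_density {d : ℕ} {I : Type*} [Fintype I] {g : I → Euc d} (hg : Function.Injective g)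
    (P Q : Measure (Euc d)) [IsProbabilityMeasure Q] (hP : P (Set.range g)ᶜ = 0)
    (γ : Measure (Euc d × Euc d)) (hγ : IsCoupling γ Q P) :
    ∃ f : I → Euc d → ℝ≥0∞, (∀ k, Measurable (f k)) ∧ (∀ᵐ y ∂Q, ∑ k, f k y = 1) ∧
      (∀ k, ∫⁻ y, f k y ∂Q = P {g k}) ∧
      ∫⁻ y, ∑ k, f k y * (‖y - g k‖₊ : ℝ≥0∞) ^ 2 ∂Q ≤
        ∫⁻ p, (‖p.1 - p.2‖₊ : ℝ≥0∞) ^ 2 ∂γ := by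
  have hγprob : IsProbabilityMeasure γ := by
    constructor
    have := congrArg (fun μ => μ Set.univ) hγ.1
    simpa [Measure.map_apply measurable_fst MeasurableSet.univ] using this
  have hdis : Q.compProd γ.condKernel = γ := by
    have := γ.disintegrate γ.condKernel
    rwa [Measure.fst, hγ.1] at this
  set κ := γ.condKernel
  have hrange : MeasurableSet (Set.range g) := (Set.finite_range g).measurableSet
  have hmarg : ∀ s, MeasurableSet s → ∫⁻ y, κ y s ∂Q = P s := by
    intro s hs
    rw [← hγ.2, Measure.map_apply measurable_snd hs]
    conv_rhs => rw [← hdis]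
    rw [Measure.compProd_apply (measurable_snd hs)]
    rfl
  refine ⟨fun k y => κ y {g k}, fun k => ProbabilityTheory.Kernel.measurable_coe κ
    (measurableSet_singleton _), ?_, fun k => hmarg _ (measurableSet_singleton _), ?_⟩
  · have h0 := hmarg _ hrange.compl
    rw [hP, lintegral_eq_zero_iff
      (ProbabilityTheory.Kernel.measurable_coe κ hrange.compl)] at h0
    filter_upwards [h0] with y hy
    have h1 := setLIntegral_range hg (κ y) (fun _ => 1)
    simp only [one_mul, setLIntegral_one] at h1
    rw [← h1]
    exact (prob_compl_eq_zero_iff hrange).1 hy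
  · conv_rhs => rw [← hdis]
    rw [Measure.lintegral_compProd (by fun_prop)]
    apply lintegral_mono
    intro y
    have h1 := setLIntegral_range hg (κ y) (fun z => (‖y - z‖₊ : ℝ≥0∞) ^ 2)
    simp only [mul_comm (κ y _)]
    rw [← h1]
    exact setLIntegral_le_lintegral _ _

/-! ### The multi-marginal transport problem -/

/-- A discrete multi-coupling: weights on `N`-tuples from `I`, of total mass one, whose `i`-th
marginal is `p i`. -/
def IsPlan {N : ℕ} {I : Type*} [Fintype I] [DecidableEq I] (p : Fin N → I → ℝ≥0∞)
    (w : (Fin N → I) → ℝ≥0∞) : Prop :=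
  ∑ x, w x = 1 ∧ ∀ i k, ∑ x, (if x i = k then w x else 0) = p i k

/-- The mean of the points `g (x i)`. -/
def tupleMean {N d : ℕ} {I : Type*} (g : I → Euc d) (x : Fin N → I) : Euc d :=
  (N : ℝ)⁻¹ • ∑ i, g (x i)

/-- The sum of squared distances of the points `g (x i)` to their mean. -/
def tupleCost {N d : ℕ} {I : Type*} (g : I → Euc d) (x : Fin N → I) : ℝ :=
  ∑ i, ‖tupleMean g x - g (x i)‖ ^ 2

lemma tupleCost_nonneg {N d : ℕ} {I : Type*} (g : I → Euc d) (x : Fin N → I) :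
    0 ≤ tupleCost g x := Finset.sum_nonneg fun _ _ => by positivity

lemma IsPlan.sum_marginal {N : ℕ} {I : Type*} [Fintype I] [DecidableEq I] {p : Fin N → I → ℝ≥0∞}
    {w : (Fin N → I) → ℝ≥0∞} (hw : IsPlan p w) (i : Fin N) (h : I → ℝ≥0∞) :
    ∑ x, w x * h (x i) = ∑ k, p i k * h k := by
  simp only [← hw.2, Finset.sum_mul]
  rw [Finset.sum_comm]
  simp

lemma IsPlan.le_one {N : ℕ} {I : Type*} [Fintype I] [DecidableEq I] {p : Fin N → I → ℝ≥0∞}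
    {w : (Fin N → I) → ℝ≥0∞} (hw : IsPlan p w) (x : Fin N → I) : w x ≤ 1 := by
  rw [← hw.1]
  exact Finset.single_le_sum (fun _ _ => zero_le) (Finset.mem_univ x)

/-- A cheapest plan with small support. Each marginal constraint at `k₀` follows from the others
and the total mass, which leaves `N * (card I - 1) + 1` constraints in the linear program. -/
lemma exists_optimal_plan {N : ℕ} {I : Type*} [Fintype I] [DecidableEq I] (k₀ : I)
    (p : Fin N → I → ℝ≥0∞) (c : (Fin N → I) → ℝ) (hc : ∀ x, 0 ≤ c x)
    (hne : ∃ w, IsPlan p w) :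
    ∃ w, IsPlan p w ∧
      (∀ w', IsPlan p w' →
        ∑ x, w x * ENNReal.ofReal (c x) ≤ ∑ x, w' x * ENNReal.ofReal (c x)) ∧
      {x | w x ≠ 0}.ncard ≤ N * (Fintype.card I - 1) + 1 := by
  classical
  -- `none` indexes the total mass, `some (i, k)` the `i`-th marginal at `k`
  let A : Option (Fin N × {k // k ≠ k₀}) → (Fin N → I) → ℝ := fun j x =>
    j.elim 1 fun q => if x q.1 = q.2 then 1 else 0
  let b : Option (Fin N × {k // k ≠ k₀}) → ℝ := fun j => j.elim 1 fun q => (p q.1 q.2).toReal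
  have toReal_feas : ∀ w, IsPlan p w → ∀ j, ∑ x, A j x * (w x).toReal = b j := by
    intro w hw j
    have hfin : ∀ x, w x ≠ ⊤ := fun x => ((hw.le_one x).trans_lt ENNReal.one_lt_top).ne
    rcases j with _ | ⟨i, k⟩
    · simp only [A, b, Option.elim, one_mul]
      rw [← ENNReal.toReal_sum fun x _ => hfin x, hw.1, ENNReal.toReal_one]
    · simp only [A, b, Option.elim]
      rw [← hw.2, ENNReal.toReal_sum]
      · refine Finset.sum_congr rfl fun x _ => ?_
        split_ifs <;> simp
      · intro x _
        split_ifs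
        · exact hfin x
        · simp
  obtain ⟨w₀, hw₀⟩ := hne
  obtain ⟨w, ⟨hw0, hwA⟩, hmin, hcard⟩ := lp_exists A b c none (fun x => rfl)
    ⟨fun x => (w₀ x).toReal, fun x => ENNReal.toReal_nonneg, toReal_feas w₀ hw₀⟩
  have hp1 : ∀ i, ∑ k, p i k = 1 := fun i => by
    have := hw₀.sum_marginal i (fun _ => 1)
    simpa [hw₀.1] using this.symm
  have hpfin : ∀ i k, p i k ≠ ⊤ := fun i k => by
    have : p i k ≤ 1 := by
      rw [← hp1 i]
      exact Finset.single_le_sum (fun _ _ => zero_le) (Finset.mem_univ k)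
    exact (this.trans_lt ENNReal.one_lt_top).ne
  have hmass : ∑ x, ENNReal.ofReal (w x) = 1 := by
    rw [← ENNReal.ofReal_sum_of_nonneg fun x _ => hw0 x]
    have := hwA none
    simp only [A, b, Option.elim, one_mul] at this
    rw [this, ENNReal.ofReal_one]
  have hmarg : ∀ i k, k ≠ k₀ → ∑ x : Fin N → I, (if x i = k then ENNReal.ofReal (w x) else 0) =
      p i k := by
    intro i k hk
    have := hwA (some (i, ⟨k, hk⟩))
    simp only [A, b, Option.elim] at this
    rw [← ENNReal.ofReal_toReal (hpfin i k), ← this, ENNReal.ofReal_sum_of_nonneg]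
    · refine Finset.sum_congr rfl fun x _ => ?_
      split_ifs <;> simp
    · intro x _
      have := hw0 x
      split_ifs <;> simp [this]
  have hplan : IsPlan p fun x => ENNReal.ofReal (w x) := by
    refine ⟨hmass, fun i k => ?_⟩
    by_cases hk : k = k₀
    · subst hk
      have h1 : ∑ k', ∑ x : Fin N → I, (if x i = k' then ENNReal.ofReal (w x) else 0) =
          ∑ k', p i k' := by
        rw [Finset.sum_comm, hp1, ← hmass]
        simp
      rw [← Finset.add_sum_erase _ _ (Finset.mem_univ k),
        ← Finset.add_sum_erase _ (p i) (Finset.mem_univ k),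
        Finset.sum_congr rfl fun k' hk' => hmarg i k' (Finset.ne_of_mem_erase hk')] at h1
      exact (ENNReal.add_left_inj (ENNReal.sum_ne_top.2 fun k' _ => hpfin i k')).1 h1
    · exact hmarg i k hk
  refine ⟨_, hplan, fun w' hw' => ?_, ?_⟩
  · have hfin : ∀ x, w' x ≠ ⊤ := fun x => ((hw'.le_one x).trans_lt ENNReal.one_lt_top).ne
    have h1 := hmin (fun x => (w' x).toReal) (fun x => ENNReal.toReal_nonneg) (toReal_feas w' hw')
    have h2 : ∀ v : (Fin N → I) → ℝ, (∀ x, 0 ≤ v x) →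
        ∑ x, ENNReal.ofReal (v x) * ENNReal.ofReal (c x) = ENNReal.ofReal (∑ x, c x * v x) := by
      intro v hv
      rw [ENNReal.ofReal_sum_of_nonneg fun x _ => mul_nonneg (hc x) (hv x)]
      refine Finset.sum_congr rfl fun x _ => ?_
      rw [mul_comm, ENNReal.ofReal_mul (hc x)]
    rw [h2 w hw0]
    have h3 := h2 (fun x => (w' x).toReal) fun x => ENNReal.toReal_nonneg
    simp only [ENNReal.ofReal_toReal (hfin _)] at h3
    rw [h3]
    exact ENNReal.ofReal_le_ofReal h1
  · have h1 : {x | ENNReal.ofReal (w x) ≠ 0} = ↑(Finset.univ.filter fun x => w x ≠ 0) := by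
      ext x
      have := hw0 x
      simp only [ne_eq, ENNReal.ofReal_eq_zero, Set.mem_ofPred_eq, Finset.coe_filter,
        Finset.mem_univ, true_and]
      rw [this.ge_iff_eq']
    rw [h1, Set.ncard_coe_finset]
    refine hcard.trans (le_of_eq ?_)
    simp [Fintype.card_subtype_compl]

/-- Gluing: couplings of a common `Q` with the `P i` are combined, conditionally independently
given `Q`, into a plan. Its cost is no larger because the mean of a tuple does at least as well
as any point `y`. -/
lemma exists_plan_of_couplings {N d : ℕ} {I : Type*} [Fintype I] [DecidableEq I] {g : I → Euc d}
    (hg : Function.Injective g) (P : Fin N → Measure (Euc d))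
    (hP : ∀ i, P i (Set.range g)ᶜ = 0) (Q : Measure (Euc d)) [IsProbabilityMeasure Q]
    (γ : Fin N → Measure (Euc d × Euc d)) (hγ : ∀ i, IsCoupling (γ i) Q (P i)) :
    ∃ w, IsPlan (fun i k => P i {g k}) w ∧
      ∑ x, w x * ENNReal.ofReal (tupleCost g x) ≤
        ∑ i, ∫⁻ p, (‖p.1 - p.2‖₊ : ℝ≥0∞) ^ 2 ∂(γ i) := by
  choose f hfm hf1 hfp hfc using fun i => exists_density hg (P i) Q (hP i) (γ i) (hγ i)
  have hf1' : ∀ᵐ y ∂Q, ∀ i, ∑ k, f i k y = 1 := ae_all_iff.2 hf1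
  have hprod : ∀ x : Fin N → I, Measurable fun y => ∏ i, f i (x i) y := fun x =>
    Finset.measurable_prod _ fun i _ => hfm i (x i)
  refine ⟨fun x => ∫⁻ y, ∏ i, f i (x i) y ∂Q, ⟨?_, fun i k => ?_⟩, ?_⟩
  · rw [← lintegral_finsetSum _ fun x _ => hprod x]
    have : ∀ᵐ y ∂Q, ∑ x : Fin N → I, ∏ i, f i (x i) y = 1 := by
      filter_upwards [hf1'] with y hy
      have h := Finset.prod_univ_sum (fun _ : Fin N => (Finset.univ : Finset I))
        (fun i k => f i k y)
      rw [← Fintype.piFinset_univ, ← h]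
      simp [hy]
    rw [lintegral_congr_ae this]
    simp
  · have h1 : ∀ x : Fin N → I, (if x i = k then ∫⁻ y, ∏ i, f i (x i) y ∂Q else 0) =
        ∫⁻ y, (∏ i, f i (x i) y) * (if x i = k then 1 else 0) ∂Q := by
      intro x
      split_ifs <;> simp
    simp only [h1]
    rw [← lintegral_finsetSum _ fun x _ => (hprod x).mul_const _, ← hfp i k]
    apply lintegral_congr_ae
    filter_upwards [hf1'] with y hy
    rw [sum_prod_mul_apply (fun i k => f i k y) hy i (fun k' => if k' = k then 1 else 0)]
    simp
  · refine le_trans ?_ (Finset.sum_le_sum fun i _ => hfc i)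
    have hmeas : ∀ i k, Measurable fun y => f i k y * (‖y - g k‖₊ : ℝ≥0∞) ^ 2 := fun i k =>
      (hfm i k).mul (by fun_prop)
    rw [← lintegral_finsetSum _ fun i _ => Finset.measurable_sum _ fun k _ => hmeas i k]
    simp only [← lintegral_mul_const _ (hprod _)]
    rw [← lintegral_finsetSum _ fun x _ => (hprod x).mul_const _]
    apply lintegral_mono_ae
    filter_upwards [hf1'] with y hy
    calc ∑ x : Fin N → I, (∏ i, f i (x i) y) * ENNReal.ofReal (tupleCost g x)
        ≤ ∑ x : Fin N → I, (∏ i, f i (x i) y) * ∑ i, (‖y - g (x i)‖₊ : ℝ≥0∞) ^ 2 := by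
          refine Finset.sum_le_sum fun x _ => mul_le_mul_right ?_ _
          simp only [enorm_sq_eq_ofReal]
          rw [← ENNReal.ofReal_sum_of_nonneg fun _ _ => by positivity]
          exact ENNReal.ofReal_le_ofReal (sum_sq_dist_mean_le (fun i => g (x i)) y)
      _ = ∑ i, ∑ k, f i k y * (‖y - g k‖₊ : ℝ≥0∞) ^ 2 := by
          simp only [Finset.mul_sum]
          rw [Finset.sum_comm]
          exact Finset.sum_congr rfl fun i _ => sum_prod_mul_apply (fun i k => f i k y) hy i
            (fun k => (‖y - g k‖₊ : ℝ≥0∞) ^ 2)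
      _ ≤ _ := le_rfl

/-- A plan exists: glue the product couplings with a Dirac mass. -/
lemma exists_plan {N d : ℕ} {I : Type*} [Fintype I] [DecidableEq I] {g : I → Euc d}
    (hg : Function.Injective g) (P : Fin N → Measure (Euc d))
    (hP : ∀ i, P i (Set.range g)ᶜ = 0) (hprob : ∀ i, IsProbabilityMeasure (P i)) :
    ∃ w, IsPlan (fun i k => P i {g k}) w := by
  obtain ⟨w, hw, -⟩ := exists_plan_of_couplings hg P hP (Measure.dirac 0)
    (fun i => (Measure.dirac 0).prod (P i)) fun i => ⟨by
      have := hprob i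
      simp, by
      have := hprob i
      simp⟩
  exact ⟨w, hw⟩

/-- The multi-marginal optimum bounds the barycenter objective of every `Q` from below. -/
lemma le_sum_W2sq_s5 {N d : ℕ} {I : Type*} [Fintype I] [DecidableEq I] {g : I → Euc d}
    (hg : Function.Injective g) (P : Fin N → Measure (Euc d))
    (hP : ∀ i, P i (Set.range g)ᶜ = 0) (Q : Measure (Euc d)) [IsProbabilityMeasure Q]
    (C : ℝ≥0∞) (hC : ∀ w, IsPlan (fun i k => P i {g k}) w →
      C ≤ ∑ x, w x * ENNReal.ofReal (tupleCost g x)) :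
    C ≤ ∑ i, W2sq Q (P i) := by
  apply ENNReal.le_of_forall_pos_le_add
  intro ε hε hfin
  have hfin' : ∀ i, W2sq Q (P i) < ⊤ := fun i => by
    simpa using ENNReal.sum_lt_top.1 hfin i (Finset.mem_univ i)
  -- the slack `ε` is shared among the `N` couplings; `N + 1` keeps the denominator nonzero
  set δ : NNReal := ε / (N + 1) with hδ
  have hδ0 : 0 < δ := by positivity
  have hex : ∀ i, ∃ γ, IsCoupling γ Q (P i) ∧
      ∫⁻ p, (‖p.1 - p.2‖₊ : ℝ≥0∞) ^ 2 ∂γ < W2sq Q (P i) + δ := by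
    intro i
    have h1 : W2sq Q (P i) < W2sq Q (P i) + δ :=
      ENNReal.lt_add_right (hfin' i).ne (by simpa using hδ0.ne')
    conv_lhs at h1 => unfold W2sq
    simp only [iInf_lt_iff, Set.mem_ofPred_eq] at h1
    obtain ⟨γ, hγ, h⟩ := h1
    exact ⟨γ, hγ, h⟩
  choose γ hγ hlt using hex
  obtain ⟨w, hw, hle⟩ := exists_plan_of_couplings hg P hP Q γ hγ
  refine (hC w hw).trans (hle.trans ((Finset.sum_le_sum fun i _ => (hlt i).le).trans ?_))
  rw [Finset.sum_add_distrib]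
  gcongr
  rw [Finset.sum_const, Finset.card_univ, Fintype.card_fin, nsmul_eq_mul]
  have : (N : NNReal) * δ ≤ ε := by
    rw [hδ, ← mul_div_assoc, div_le_iff₀ (by positivity), mul_comm]
    gcongr
    simp
  exact_mod_cast this

/-! ### The barycenter of an optimal plan -/

/-- The push-forward of a plan under the mean map. -/
def planMean {N d : ℕ} {I : Type*} [Fintype I] (g : I → Euc d) (w : (Fin N → I) → ℝ≥0∞) :
    Measure (Euc d) := ∑ x, w x • Measure.dirac (tupleMean g x)

/-- The plan itself couples its mean with each `P i`, by `x ↦ (tupleMean g x, g (x i))`. -/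
lemma sum_W2sq_planMean_le {N d : ℕ} {I : Type*} [Fintype I] [DecidableEq I] {g : I → Euc d}
    (hg : Function.Injective g) (P : Fin N → Measure (Euc d))
    (hP : ∀ i, P i (Set.range g)ᶜ = 0) (w : (Fin N → I) → ℝ≥0∞)
    (hw : IsPlan (fun i k => P i {g k}) w) :
    ∑ i, W2sq (planMean g w) (P i) ≤ ∑ x, w x * ENNReal.ofReal (tupleCost g x) := by
  have hi : ∀ i, W2sq (planMean g w) (P i) ≤
      ∑ x, w x * (‖tupleMean g x - g (x i)‖₊ : ℝ≥0∞) ^ 2 := by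
    intro i
    let γ : Measure (Euc d × Euc d) := ∑ x, w x • Measure.dirac (tupleMean g x, g (x i))
    have hγ : IsCoupling γ (planMean g w) (P i) := by
      constructor
      · ext s hs
        rw [Measure.map_apply measurable_fst hs]
        simp only [γ, planMean, Measure.finsetSum_apply, Measure.smul_apply,
          Measure.dirac_apply' _ hs, Measure.dirac_apply' _ (measurable_fst hs)]
        rfl
      · rw [measure_eq_sum_dirac hg (P i) (hP i)]
        ext s hs
        rw [Measure.map_apply measurable_snd hs]
        simp only [γ, Measure.finsetSum_apply, Measure.smul_apply, smul_eq_mul,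
          Measure.dirac_apply' _ hs, Measure.dirac_apply' _ (measurable_snd hs)]
        exact hw.sum_marginal i (fun k => s.indicator 1 (g k))
    refine (iInf₂_le γ hγ).trans (le_of_eq ?_)
    simp only [γ, lintegral_finsetSum_measure, lintegral_smul_measure, smul_eq_mul]
    refine Finset.sum_congr rfl fun x _ => ?_
    rw [lintegral_dirac' _ (by fun_prop)]
  refine (Finset.sum_le_sum fun i _ => hi i).trans (le_of_eq ?_)
  rw [Finset.sum_comm]
  refine Finset.sum_congr rfl fun x _ => ?_
  rw [← Finset.mul_sum, tupleCost, ENNReal.ofReal_sum_of_nonneg fun _ _ => by positivity]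
  simp only [enorm_sq_eq_ofReal]

lemma msupp_planMean_subset {N d : ℕ} {I : Type*} [Fintype I] (g : I → Euc d)
    (w : (Fin N → I) → ℝ≥0∞) : msupp (planMean g w) ⊆ tupleMean g '' {x | w x ≠ 0} := by
  have hfin : (tupleMean g '' {x | w x ≠ 0}).Finite := (Set.toFinite _).image _
  apply msupp_subset_of_finite hfin
  simp only [planMean, Measure.finsetSum_apply, Measure.smul_apply, smul_eq_mul,
    Measure.dirac_apply' _ hfin.measurableSet.compl]
  refine Finset.sum_eq_zero fun x _ => ?_
  by_cases hx : w x = 0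
  · simp [hx]
  · rw [Set.indicator_of_notMem, mul_zero]
    exact fun h => h ⟨x, hx, rfl⟩

lemma exists_barycenter {N d : ℕ} {I : Type*} [Fintype I] [DecidableEq I] (k₀ : I) {g : I → Euc d}
    (hg : Function.Injective g) (P : Fin N → Measure (Euc d))
    (hP : ∀ i, P i (Set.range g)ᶜ = 0) (hprob : ∀ i, IsProbabilityMeasure (P i)) :
    ∃ Pbar : Measure (Euc d), IsBarycenter P Pbar ∧ msupp Pbar ⊆ Set.range (tupleMean (N := N) g) ∧
      (msupp Pbar).ncard ≤ N * (Fintype.card I - 1) + 1 := by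
  obtain ⟨w, hw, hmin, hcard⟩ := exists_optimal_plan k₀ (fun i k => P i {g k}) (tupleCost g)
    (tupleCost_nonneg g) (exists_plan hg P hP hprob)
  refine ⟨planMean g w, ⟨⟨?_⟩, ?_, fun Q hQ _ => ?_⟩, ?_, ?_⟩
  · simp [planMean, hw.1]
  · simp only [FinSecondMoment, planMean, lintegral_finsetSum_measure, lintegral_smul_measure,
      smul_eq_mul, ENNReal.sum_lt_top]
    intro x _
    rw [lintegral_dirac' _ (by fun_prop)]
    exact ENNReal.mul_lt_top ((hw.le_one x).trans_lt ENNReal.one_lt_top)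
      (ENNReal.pow_lt_top ENNReal.coe_lt_top)
  · exact (sum_W2sq_planMean_le hg P hP w hw).trans (le_sum_W2sq_s5 hg P hP Q _ hmin)
  · exact (msupp_planMean_subset g w).trans (Set.image_subset_range _ _)
  · calc (msupp (planMean g w)).ncard ≤ (tupleMean g '' {x | w x ≠ 0}).ncard :=
          Set.ncard_le_ncard (msupp_planMean_subset g w) ((Set.toFinite _).image _)
      _ ≤ {x | w x ≠ 0}.ncard := Set.ncard_image_le (Set.toFinite _)
      _ ≤ _ := hcard

/-! ### Uniform grids -/

/-- The point of the uniform grid with multi-index `k`; `Fin (L s)` encodes `0 ≤ k s ≤ L s - 1`. -/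
def gridPoint {d : ℕ} (e₀ : Euc d) (e : Fin d → Euc d) (L : Fin d → ℕ) (k : ∀ s, Fin (L s)) :
    Euc d := e₀ + ∑ s, ((k s : ℝ) / ((L s : ℝ) - 1)) • e s

lemma gridPoint_injective {d : ℕ} (e₀ : Euc d) (e : Fin d → Euc d) (he : LinearIndependent ℝ e)
    (L : Fin d → ℕ) (hL : ∀ s, 2 ≤ L s) : Function.Injective (gridPoint e₀ e L) := by
  intro k k' h
  have h1 := add_left_cancel h
  have h2 := Fintype.linearIndependent_iff.1 he
    (fun s => (k s : ℝ) / ((L s : ℝ) - 1) - (k' s : ℝ) / ((L s : ℝ) - 1))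
    (by simp only [sub_smul, Finset.sum_sub_distrib, h1, sub_self])
  funext s
  have h3 : (0 : ℝ) < (L s : ℝ) - 1 := by
    have : (2 : ℝ) ≤ L s := by exact_mod_cast hL s
    linarith
  have h4 := sub_eq_zero.1 (h2 s)
  rw [div_left_inj' h3.ne'] at h4
  exact Fin.ext (by exact_mod_cast h4)

lemma tupleMean_gridPoint {d N : ℕ} (hN : N ≠ 0) (e₀ : Euc d) (e : Fin d → Euc d) (L : Fin d → ℕ)
    (x : Fin N → ∀ s, Fin (L s)) :
    tupleMean (gridPoint e₀ e L) x =
      e₀ + ∑ s, (((∑ i, (x i s : ℕ) : ℕ) : ℝ) / ((N : ℝ) * ((L s : ℝ) - 1))) • e s := by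
  have hN' : (N : ℝ) ≠ 0 := by exact_mod_cast hN
  simp only [tupleMean, gridPoint, Finset.sum_add_distrib, Finset.sum_const, Finset.card_univ,
    Fintype.card_fin, smul_add]
  congr 1
  · rw [← Nat.cast_smul_eq_nsmul ℝ, smul_smul, inv_mul_cancel₀ hN', one_smul]
  · rw [Finset.sum_comm, Finset.smul_sum]
    refine Finset.sum_congr rfl fun s _ => ?_
    rw [← Finset.sum_smul, smul_smul, ← Finset.sum_div]
    congr 1
    push_cast
    rw [div_mul_eq_div_div, ← mul_div_assoc, mul_comm, ← div_eq_mul_inv]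

/-- if the discrete probability measures `P₁, …, P_N` are all supported in the
uniform `L₁ × ⋯ × L_d` grid generated by `e₀` and the linearly independent `e₁, …, e_d`, then
there is a barycenter supported in the refined `(N(L₁-1)+1) × ⋯ × (N(L_d-1)+1)` uniform grid,
with support of cardinality at most `N(∏ₛ Lₛ - 1) + 1`. -/
theorem stmt5 {d N : ℕ} (P : Fin N → MeasureTheory.Measure (Euc d))
    (hP : ∀ i, IsDiscreteProb (P i))
    (e₀ : Euc d) (e : Fin d → Euc d) (he : LinearIndependent ℝ e)
    (L : Fin d → ℕ) (hL : ∀ s, 2 ≤ L s)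
    (hsupp : ∀ i, msupp (P i) ⊆
      {v | ∃ l : Fin d → ℕ, (∀ s, l s ≤ L s - 1) ∧
        v = e₀ + ∑ s, ((l s : ℝ) / ((L s : ℝ) - 1)) • e s}) :
    ∃ Pbar : MeasureTheory.Measure (Euc d), IsBarycenter P Pbar ∧
      msupp Pbar ⊆
        {v | ∃ l : Fin d → ℕ, (∀ s, l s ≤ N * (L s - 1)) ∧
          v = e₀ + ∑ s, ((l s : ℝ) / ((N : ℝ) * ((L s : ℝ) - 1))) • e s} ∧
      (msupp Pbar).ncard ≤ N * ((∏ s, L s) - 1) + 1 := by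
  rcases Nat.eq_zero_or_pos N with rfl | hN
  · -- without measures everything is a barycenter; the refined grid degenerates to `e₀`
    have hsub : msupp (Measure.dirac e₀) ⊆ {e₀} :=
      msupp_subset_of_finite (Set.finite_singleton _) (by simp)
    refine ⟨Measure.dirac e₀, ⟨inferInstance, ?_, fun Q _ _ => by simp⟩, ?_, ?_⟩
    · rw [FinSecondMoment, lintegral_dirac' _ (by fun_prop)]
      exact ENNReal.pow_lt_top ENNReal.coe_lt_top
    · intro v hv
      exact ⟨0, fun s => by simp, by simpa using hsub hv⟩
    · have := Set.ncard_le_ncard hsub (Set.finite_singleton _)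
      simpa using this
  · have hrange : ∀ i, msupp (P i) ⊆ Set.range (gridPoint e₀ e L) := by
      intro i v hv
      obtain ⟨l, hl, rfl⟩ := hsupp i hv
      exact ⟨fun s => ⟨l s, by have := hl s; have := hL s; omega⟩, rfl⟩
    obtain ⟨Pbar, h1, h2, h3⟩ := exists_barycenter (fun s => ⟨0, by have := hL s; omega⟩)
      (gridPoint_injective e₀ e he L hL) P
      (fun i => measure_compl_eq_zero_of_msupp_subset (hrange i)) (fun i => (hP i).1)
    refine ⟨Pbar, h1, fun v hv => ?_, by simpa using h3⟩
    obtain ⟨x, rfl⟩ := h2 hv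
    refine ⟨fun s => ∑ i, (x i s : ℕ), fun s => ?_, tupleMean_gridPoint hN.ne' e₀ e L x⟩
    calc ∑ i, (x i s : ℕ) ≤ ∑ _i : Fin N, (L s - 1) :=
          Finset.sum_le_sum fun i _ => by have := (x i s).isLt; omega
      _ = N * (L s - 1) := by simp
end
end

section
/- Strict complementary slackness: let A be a real m×n matrix, b ∈ ℝᵐ, c ∈ ℝⁿ, and suppose the primal LP min{cᵀx : Ax = b, x ≥ 0} and the dual LP max{bᵀy : Aᵀy ≤ c} are both feasible and both bounded. Then there exist an optimal primal solution x* and an optimal dual solution y* such that for every index i ∈ {1,…,n}: x*ᵢ (cᵢ − aᵢᵀ y*) = 0 and x*ᵢ + (cᵢ − aᵢᵀ y*) > 0, where aᵢ denotes the i-th column of A. -/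
/-!
The proof applies a theorem of Tucker to the homogeneous self-dual system attached to the two
programs. Tucker's theorem (`exists_strictly_complementary`) says that for a linear map `F` into
`ℝ^ι` there are a point `F z ≥ 0` of its range and a vector `v ≥ 0` orthogonal to its range such
that `F z + v > 0`. Its proof takes `F z ≥ 0` of maximal support `S`. By maximality the projection
of the range to the coordinates outside `S` misses the standard simplex, and a hyperplane
separating this subspace from the compact simplex provides `v`.

The homogeneous system in the unknowns `(x, y, τ)` is
`x ≥ 0`, `cτ - Aᵀy ≥ 0`, `τ ≥ 0`, `bᵀy - cᵀx ≥ 0`, `Ax = bτ`.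
It is skew-symmetric: the multipliers `v` for it are again a solution, with variables and slacks
interchanged, so adding the two gives a solution with `x + s > 0` and `τ + ρ > 0`, where
`s = cτ - Aᵀy` and `ρ = bᵀy - cᵀx`. The identity `xᵀs + τρ = 0` holds for all solutions, so
`xᵢsᵢ = 0` and `τρ = 0`. If `τ > 0`, dividing by `τ` gives the required pair, optimal by weak
duality. If `τ = 0`, then `bᵀy > cᵀx`, whereas feasibility of both programs forces `bᵀy ≤ 0` and
`cᵀx ≥ 0`.
-/

open Matrix

/-- **Tucker's theorem**: a subspace of `ℝ^ι`, given as the range of `F`, and its orthogonal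
complement contain nonnegative vectors whose sum is positive in every coordinate. -/
lemma exists_strictly_complementary {ι V : Type*} [Fintype ι] [AddCommGroup V] [Module ℝ V]
    (F : V →ₗ[ℝ] (ι → ℝ)) :
    ∃ (z : V) (v : ι → ℝ), (∀ i, 0 ≤ F z i) ∧ (∀ i, 0 ≤ v i) ∧ (∀ i, 0 < F z i + v i) ∧
      ∀ w, v ⬝ᵥ F w = 0 := by
  classical
  obtain ⟨S, ⟨z, hz, hzS⟩, hmax⟩ := Set.Finite.exists_maximal
    (Set.toFinite {S : Finset ι | ∃ z, (∀ i, 0 ≤ F z i) ∧ ∀ i ∈ S, 0 < F z i})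
    ⟨∅, 0, by simp, by simp⟩
  let L : Submodule ℝ ({i // i ∉ S} → ℝ) :=
    LinearMap.range ((LinearMap.funLeft ℝ ℝ (Subtype.val : {i // i ∉ S} → ι)) ∘ₗ F)
  have hdisj : Disjoint (stdSimplex ℝ {i // i ∉ S}) (L : Set ({i // i ∉ S} → ℝ)) := by
    rw [Set.disjoint_left]
    rintro _ ⟨h0, h1⟩ ⟨w, rfl⟩
    obtain ⟨i, -, hi⟩ : ∃ i ∈ Finset.univ, (0 : ℝ) <
        ((LinearMap.funLeft ℝ ℝ (Subtype.val : {i // i ∉ S} → ι)) ∘ₗ F) w i :=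
      Finset.exists_lt_of_sum_lt (by rw [h1]; simp)
    simp only [LinearMap.comp_apply, LinearMap.funLeft_apply] at hi h0
    -- A small positive multiple of `w` keeps the coordinates in `S` positive.
    have hev : ∀ᶠ ε in nhdsWithin (0 : ℝ) (Set.Ioi 0), ∀ j ∈ S, 0 < F z j + ε * F w j := by
      rw [Filter.eventually_all_finset]
      intro j hj
      have hc : Filter.Tendsto (fun ε : ℝ => F z j + ε * F w j) (nhds 0)
          (nhds (F z j + 0 * F w j)) := by
        apply Continuous.tendsto (f := fun ε : ℝ => F z j + ε * F w j)
        fun_prop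
      refine (hc.mono_left nhdsWithin_le_nhds).eventually (lt_mem_nhds ?_)
      simpa using hzS j hj
    obtain ⟨ε, hε, hεpos⟩ := (hev.and self_mem_nhdsWithin).exists
    have hεpos : 0 < ε := hεpos
    have hmem : insert i.1 S ∈
        {S : Finset ι | ∃ z, (∀ i, 0 ≤ F z i) ∧ ∀ i ∈ S, 0 < F z i} := by
      refine ⟨z + ε • w, fun j => ?_, fun j hj => ?_⟩
      · simp only [map_add, map_smul, Pi.add_apply, Pi.smul_apply, smul_eq_mul]
        by_cases hj : j ∈ S
        · exact (hε j hj).le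
        · have := hz j
          have := h0 ⟨j, hj⟩
          positivity
      · simp only [map_add, map_smul, Pi.add_apply, Pi.smul_apply, smul_eq_mul]
        rcases Finset.mem_insert.1 hj with rfl | hj
        · have := hz i.1
          positivity
        · exact hε j hj
    exact i.2 (hmax hmem (Finset.subset_insert _ _) (Finset.mem_insert_self _ _))
  obtain ⟨f, u, r, hu, hur, hr⟩ := geometric_hahn_banach_compact_closed
    (convex_stdSimplex ℝ {i // i ∉ S}) (isCompact_stdSimplex ℝ {i // i ∉ S}) L.convex
    L.closed_of_finiteDimensional hdisj
  have hr0 : r < 0 := by simpa using hr 0 L.zero_mem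
  -- A linear functional bounded below on a subspace vanishes there.
  have hfL : ∀ q ∈ L, f q = 0 := by
    intro q hq
    by_contra hne
    have := hr ((r / f q) • q) (L.smul_mem _ hq)
    rw [map_smul, smul_eq_mul, div_mul_cancel₀ _ hne] at this
    exact lt_irrefl _ this
  have hneg : ∀ i, f (Pi.single i 1) < 0 := fun i =>
    (hu _ (single_mem_stdSimplex ℝ i)).trans (hur.trans hr0)
  refine ⟨z, fun i => if h : i ∉ S then -f (Pi.single ⟨i, h⟩ 1) else 0, hz, fun i => ?_,
    fun i => ?_, fun w => ?_⟩
  · dsimp only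
    split_ifs with h
    · exact le_rfl
    · exact neg_nonneg.2 (hneg _).le
  · dsimp only
    split_ifs with h
    · simpa using hzS i h
    · have := hz i
      have := hneg ⟨i, h⟩
      linarith
  · have h := hfL _ (LinearMap.mem_range_self
      ((LinearMap.funLeft ℝ ℝ (Subtype.val : {i // i ∉ S} → ι)) ∘ₗ F) w)
    rw [← ContinuousLinearMap.coe_coe, LinearMap.pi_apply_eq_sum_univ] at h
    have hsingle : ∀ k : {i // i ∉ S},
        (fun j => if k = j then (1 : ℝ) else 0) = Pi.single k 1 := by
      intro k
      ext j
      simp [Pi.single_apply, eq_comm]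
    simp only [hsingle, LinearMap.comp_apply, LinearMap.funLeft_apply, smul_eq_mul,
      ContinuousLinearMap.coe_coe] at h
    rw [dotProduct, ← Fintype.sum_subtype_add_sum_subtype (fun i => i ∉ S)]
    have hS : ∀ k : {i // ¬ i ∉ S}, (if h : k.1 ∉ S then -f (Pi.single ⟨k.1, h⟩ 1) else 0) *
        F w k.1 = 0 := fun k => by rw [dif_neg k.2, zero_mul]
    have hT : ∀ k : {i // i ∉ S}, (if h : k.1 ∉ S then -f (Pi.single ⟨k.1, h⟩ 1) else 0) *
        F w k.1 = -(F w k.1 * f (Pi.single k 1)) := fun k => by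
      rw [dif_pos k.2]
      ring
    rw [Finset.sum_congr rfl fun k _ => hS k, Finset.sum_congr rfl fun k _ => hT k,
      Finset.sum_neg_distrib, h]
    simp

lemma dotProduct_transpose_mulVec_eq {m n : ℕ} (A : Matrix (Fin m) (Fin n) ℝ) (x : Fin n → ℝ)
    (y : Fin m → ℝ) : x ⬝ᵥ Aᵀ *ᵥ y = (A *ᵥ x) ⬝ᵥ y := by
  rw [mulVec_transpose, dotProduct_comm, ← dotProduct_mulVec, dotProduct_comm]

/-- The skew-symmetric homogeneous system of the pair of programs, in the unknowns `(x, y, τ)`.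
Its values are `x`, `cτ - Aᵀy`, `τ`, `bᵀy - cᵀx`, `Ax - bτ` and `bτ - Ax`; the last two encode the
equation `Ax = bτ` as a pair of inequalities. -/
def selfDualSystem {m n : ℕ} (A : Matrix (Fin m) (Fin n) ℝ) (b : Fin m → ℝ) (c : Fin n → ℝ) :
    ((Fin n → ℝ) × (Fin m → ℝ) × ℝ) →ₗ[ℝ]
      ((Fin n ⊕ Fin n) ⊕ (Unit ⊕ Unit) ⊕ (Fin m ⊕ Fin m) → ℝ) where
  toFun z := Sum.elim (Sum.elim z.1 (z.2.2 • c - Aᵀ *ᵥ z.2.1))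
    (Sum.elim (Sum.elim (fun _ => z.2.2) (fun _ => b ⬝ᵥ z.2.1 - c ⬝ᵥ z.1))
      (Sum.elim (A *ᵥ z.1 - z.2.2 • b) (z.2.2 • b - A *ᵥ z.1)))
  map_add' z w := by
    ext ((i | i) | (i | i) | (i | i)) <;>
      simp [mulVec_add, dotProduct_add] <;> ring
  map_smul' t z := by
    ext ((i | i) | (i | i) | (i | i)) <;>
      simp [mulVec_smul, dotProduct_smul] <;> ring

/-- The homogeneous system has a solution in which the sum of each variable and its dual slack is
positive. It is the sum of the point and the multipliers from Tucker's theorem: by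
skew-symmetry the multipliers are themselves a solution, with variables and slacks interchanged. -/
lemma exists_homogeneous_solution {m n : ℕ} (A : Matrix (Fin m) (Fin n) ℝ) (b : Fin m → ℝ)
    (c : Fin n → ℝ) :
    ∃ (x : Fin n → ℝ) (y : Fin m → ℝ) (τ : ℝ),
      (∀ i, 0 ≤ x i) ∧ (∀ i, 0 ≤ (τ • c - Aᵀ *ᵥ y) i) ∧ 0 ≤ τ ∧ 0 ≤ b ⬝ᵥ y - c ⬝ᵥ x ∧
      A *ᵥ x = τ • b ∧ (∀ i, 0 < x i + (τ • c - Aᵀ *ᵥ y) i) ∧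
      0 < τ + (b ⬝ᵥ y - c ⬝ᵥ x) := by
  obtain ⟨⟨x, y, τ⟩, v, hF, hv, hpos, horth⟩ :=
    exists_strictly_complementary (selfDualSystem A b c)
  -- The multipliers `v`, split along the six blocks of the system.
  let s' : Fin n → ℝ := fun i => v (.inl (.inl i))
  let x' : Fin n → ℝ := fun i => v (.inl (.inr i))
  let ρ' : ℝ := v (.inr (.inl (.inl ())))
  let τ' : ℝ := v (.inr (.inl (.inr ())))
  let p : Fin m → ℝ := fun i => v (.inr (.inr (.inl i)))
  let q : Fin m → ℝ := fun i => v (.inr (.inr (.inr i)))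
  have key : ∀ (X : Fin n → ℝ) (Y : Fin m → ℝ) (T : ℝ),
      s' ⬝ᵥ X + x' ⬝ᵥ (T • c - Aᵀ *ᵥ Y) + (ρ' * T + τ' * (b ⬝ᵥ Y - c ⬝ᵥ X)) +
        (p ⬝ᵥ (A *ᵥ X - T • b) + q ⬝ᵥ (T • b - A *ᵥ X)) = 0 := by
    intro X Y T
    rw [← horth (X, Y, T)]
    simp [dotProduct, selfDualSystem, s', x', ρ', τ', p, q]
    ring
  have hs : s' = τ' • c - Aᵀ *ᵥ (p - q) := by
    refine dotProduct_eq _ _ fun X => ?_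
    have h := key X 0 0
    rw [sub_dotProduct, dotProduct_comm (Aᵀ *ᵥ _), dotProduct_transpose_mulVec_eq,
      dotProduct_comm (A *ᵥ X), sub_dotProduct, smul_dotProduct, smul_eq_mul]
    simp only [zero_smul, mulVec_zero, sub_zero, dotProduct_zero, mul_zero, zero_sub,
      dotProduct_neg] at h
    linarith
  have hx : A *ᵥ x' = τ' • b := by
    refine dotProduct_eq _ _ fun Y => ?_
    have h := key 0 Y 0
    simp only [zero_smul, mulVec_zero, sub_zero, dotProduct_zero, mul_zero, zero_sub,
      dotProduct_neg, dotProduct_transpose_mulVec_eq] at h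
    rw [smul_dotProduct, smul_eq_mul]
    linarith
  have hρ : ρ' = b ⬝ᵥ (p - q) - c ⬝ᵥ x' := by
    have h := key 0 0 1
    simp only [one_smul, mulVec_zero, sub_zero, dotProduct_zero, mul_zero, zero_sub,
      dotProduct_neg, mul_one] at h
    rw [dotProduct_sub, dotProduct_comm b, dotProduct_comm b, dotProduct_comm c]
    linarith
  have hA : A *ᵥ x = τ • b := by
    ext i
    have h1 := hF (.inr (.inr (.inl i)))
    have h2 := hF (.inr (.inr (.inr i)))
    simp [selfDualSystem] at h1 h2 ⊢
    linarith
  have hsum : (τ + τ') • c - Aᵀ *ᵥ (y + (p - q)) = (τ • c - Aᵀ *ᵥ y) + s' := by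
    rw [hs, mulVec_add, add_smul]
    abel
  have hsum' : b ⬝ᵥ (y + (p - q)) - c ⬝ᵥ (x + x') = (b ⬝ᵥ y - c ⬝ᵥ x) + ρ' := by
    rw [hρ, dotProduct_add, dotProduct_add]
    ring
  refine ⟨x + x', y + (p - q), τ + τ', fun i => ?_, fun i => ?_, ?_, ?_, ?_, fun i => ?_, ?_⟩
  · exact add_nonneg (hF (.inl (.inl i))) (hv _)
  · rw [hsum]
    exact add_nonneg (hF (.inl (.inr i))) (hv _)
  · exact add_nonneg (hF (.inr (.inl (.inl ())))) (hv _)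
  · rw [hsum']
    exact add_nonneg (hF (.inr (.inl (.inr ())))) (hv _)
  · rw [mulVec_add, hA, hx, add_smul]
  · rw [hsum]
    have h1 : 0 < x i + s' i := hpos (.inl (.inl i))
    have h2 : 0 < (τ • c - Aᵀ *ᵥ y) i + x' i := hpos (.inl (.inr i))
    simp only [Pi.add_apply]
    linarith
  · rw [hsum']
    have h1 : 0 < τ + ρ' := hpos (.inr (.inl (.inl ())))
    have h2 : 0 < (b ⬝ᵥ y - c ⬝ᵥ x) + τ' := hpos (.inr (.inl (.inr ())))
    linarith

/-- strict complementary slackness: if the primal LP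
`min {cᵀx : Ax = b, x ≥ 0}` and the dual LP `max {bᵀy : Aᵀy ≤ c}` are both feasible and
both bounded, then there exist an optimal primal solution `x*` and an optimal dual solution
`y*` such that for every index `i` one has `x*ᵢ (cᵢ - aᵢᵀ y*) = 0` and
`x*ᵢ + (cᵢ - aᵢᵀ y*) > 0`, where `aᵢ` is the `i`-th column of `A` (so `aᵢᵀ y = (Aᵀ y)ᵢ`). -/
theorem stmt8 {m n : ℕ} (A : Matrix (Fin m) (Fin n) ℝ) (b : Fin m → ℝ) (c : Fin n → ℝ)
    (hPfeas : ∃ x : Fin n → ℝ, (∀ i, 0 ≤ x i) ∧ A.mulVec x = b)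
    (hDfeas : ∃ y : Fin m → ℝ, ∀ i, Aᵀ.mulVec y i ≤ c i)
    (hPbdd : ∃ M : ℝ, ∀ x : Fin n → ℝ, (∀ i, 0 ≤ x i) → A.mulVec x = b → M ≤ c ⬝ᵥ x)
    (hDbdd : ∃ M : ℝ, ∀ y : Fin m → ℝ, (∀ i, Aᵀ.mulVec y i ≤ c i) → b ⬝ᵥ y ≤ M) :
    ∃ (x : Fin n → ℝ) (y : Fin m → ℝ),
      ((∀ i, 0 ≤ x i) ∧ A.mulVec x = b) ∧
      (∀ x' : Fin n → ℝ, (∀ i, 0 ≤ x' i) → A.mulVec x' = b → c ⬝ᵥ x ≤ c ⬝ᵥ x') ∧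
      (∀ i, Aᵀ.mulVec y i ≤ c i) ∧
      (∀ y' : Fin m → ℝ, (∀ i, Aᵀ.mulVec y' i ≤ c i) → b ⬝ᵥ y' ≤ b ⬝ᵥ y) ∧
      (∀ i, x i * (c i - Aᵀ.mulVec y i) = 0 ∧ 0 < x i + (c i - Aᵀ.mulVec y i)) := by
  have weak : ∀ (x : Fin n → ℝ) (y : Fin m → ℝ), (∀ i, 0 ≤ x i) → A *ᵥ x = b →
      (∀ i, (Aᵀ *ᵥ y) i ≤ c i) → b ⬝ᵥ y ≤ c ⬝ᵥ x := by
    intro x y hx hAx hy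
    rw [← hAx, ← dotProduct_transpose_mulVec_eq, dotProduct_comm c]
    exact dotProduct_le_dotProduct_of_nonneg_left hy hx
  obtain ⟨x, y, τ, hx, hs, hτ, hρ, hA, hxs, hτρ⟩ := exists_homogeneous_solution A b c
  have hskew : x ⬝ᵥ (τ • c - Aᵀ *ᵥ y) + τ * (b ⬝ᵥ y - c ⬝ᵥ x) = 0 := by
    rw [dotProduct_sub, dotProduct_transpose_mulVec_eq, hA, dotProduct_smul, smul_dotProduct, dotProduct_comm x c,
      smul_eq_mul, smul_eq_mul]
    ring
  have hxs_nonneg : ∀ i ∈ Finset.univ, 0 ≤ x i * (τ • c - Aᵀ *ᵥ y) i :=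
    fun i _ => mul_nonneg (hx i) (hs i)
  have hxs0 : x ⬝ᵥ (τ • c - Aᵀ *ᵥ y) = 0 :=
    le_antisymm (by linarith [mul_nonneg hτ hρ]) (Finset.sum_nonneg hxs_nonneg)
  have hcomp : ∀ i, x i * (τ • c - Aᵀ *ᵥ y) i = 0 := fun i =>
    (Finset.sum_eq_zero_iff_of_nonneg hxs_nonneg).1 hxs0 i (Finset.mem_univ i)
  rcases hτ.eq_or_lt with rfl | hτ
  · exfalso
    obtain ⟨x₀, hx₀, hAx₀⟩ := hPfeas
    obtain ⟨y₀, hy₀⟩ := hDfeas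
    have h1 : b ⬝ᵥ y ≤ 0 := by
      rw [← hAx₀, ← dotProduct_transpose_mulVec_eq, ← dotProduct_zero x₀]
      refine dotProduct_le_dotProduct_of_nonneg_left (fun i => ?_) hx₀
      simpa using hs i
    have h2 : 0 ≤ c ⬝ᵥ x := by
      have : x ⬝ᵥ Aᵀ *ᵥ y₀ ≤ x ⬝ᵥ c := dotProduct_le_dotProduct_of_nonneg_left hy₀ hx
      rw [dotProduct_transpose_mulVec_eq, hA, zero_smul, zero_dotProduct, dotProduct_comm] at this
      exact this
    linarith
  · have hslack : ∀ i, c i - (Aᵀ *ᵥ (τ⁻¹ • y)) i = τ⁻¹ * (τ • c - Aᵀ *ᵥ y) i := by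
      intro i
      simp only [mulVec_smul, Pi.smul_apply, Pi.sub_apply, smul_eq_mul]
      field_simp
    have hτi : 0 < τ⁻¹ := inv_pos.2 hτ
    have hxf : ∀ i, 0 ≤ (τ⁻¹ • x) i := fun i => mul_nonneg hτi.le (hx i)
    have hAf : A *ᵥ (τ⁻¹ • x) = b := by
      rw [mulVec_smul, hA, smul_smul, inv_mul_cancel₀ hτ.ne', one_smul]
    have hyf : ∀ i, (Aᵀ *ᵥ (τ⁻¹ • y)) i ≤ c i := fun i => by
      rw [← sub_nonneg, hslack]
      exact mul_nonneg hτi.le (hs i)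
    have hgap : c ⬝ᵥ (τ⁻¹ • x) ≤ b ⬝ᵥ (τ⁻¹ • y) := by
      rw [dotProduct_smul, dotProduct_smul]
      exact mul_le_mul_of_nonneg_left (sub_nonneg.1 hρ) hτi.le
    refine ⟨τ⁻¹ • x, τ⁻¹ • y, ⟨hxf, hAf⟩, fun x' hx' hAx' => ?_, hyf, fun y' hy' => ?_,
      fun i => ?_⟩
    · exact hgap.trans (weak x' _ hx' hAx' hyf)
    · exact (weak _ y' hxf hAf hy').trans hgap
    · rw [hslack, Pi.smul_apply, smul_eq_mul, ← mul_add]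
      refine ⟨?_, mul_pos hτi (hxs i)⟩
      rw [mul_mul_mul_comm, hcomp, mul_zero]
end
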